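/- arXiv:1109.5524 — 7 statements merged into one kernel-verified Lean document; each statement's English description precedes it below -/
import Mathlib

section
/- Shift lemma, part (ii). Suppose η = 0 and s_i = 0 for some 1 ≤ i ≤ β. Then Δ^{R,[0;ξ]}_{S,T1,T2} = (−1)^{α} · Δ^{R−1,[0;ξ−2]}_{S+1,T1+1,T2+1}, where R−1 = (r_1−1, …, r_α−1), S+1 = (s_1+1, …, s_β+1), T1+1 = (t¹_1+1, …, t¹_{c1}+1), and T2+1 = (t²_1+1, …, t²_{c2}+1). -/
open scoped BigOperators

namespace Stmt10

/-- The integer segment tuple `⟨a,b⟩ = (a, a+1, …, b)`, empty when `b < a`. -/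
def seg (a b : ℤ) : List ℤ := (List.range (b - a + 1).toNat).map (fun k => a + (k : ℤ))

/-- Product of `g x y` over ordered pairs `x ≺ y` in the list `L`. -/
def pairProd {ι : Type*} (L : List ι) (g : ι → ι → ℂ) : ℂ :=
  ∏ i : Fin L.length, ∏ j : Fin L.length, if i < j then g (L.get i) (L.get j) else 1

/-- Product of `g x` over a list. -/
def prodL {ι : Type*} (L : List ι) (g : ι → ℂ) : ℂ := (L.map g).prod

/-- Product of `g x y` over pairs `(x, y) ∈ L × M`. -/
def prodLL {ι : Type*} (L M : List ι) (g : ι → ι → ℂ) : ℂ :=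
  (L.map (fun x => (M.map (g x)).prod)).prod

/-- Determinant of the square matrix whose rows and columns are labelled by the given
key lists (by convention `0` if the two lists have different lengths). -/
noncomputable def listDet {α β : Type*} (rows : List α) (cols : List β) (e : α → β → ℂ) : ℂ :=
  if h : rows.length = cols.length then
    Matrix.det (Matrix.of fun i j : Fin rows.length =>
      e (rows.get i) (cols.get (Fin.cast h j)))
  else 0

/-- The coefficient-free sparse determinant `Δ^{R,[η;ξ]}_{S,T1,T2}` built from the
coefficient-free Baxter Q-functions, as a function of the spectral parameter `u`. -/
noncomputable def DeltaCF {ι : Type*} (hbar : ℂ) (Qb Qf : ι → ℂ → ℂ) (Qbf : ι → ι → ℂ → ℂ)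
    (B1 B2 F : List ι) (R S T1 T2 : List ℤ) (η ξ : ℤ) (u : ℂ) : ℂ :=
  listDet
    ((B1.map (Sum.inl : ι → ι ⊕ (ι ⊕ ℤ)) ++
      B2.map (fun b => (Sum.inr (Sum.inl b) : ι ⊕ (ι ⊕ ℤ))) ++
      R.map (fun r => (Sum.inr (Sum.inr r) : ι ⊕ (ι ⊕ ℤ)))))
    ((F.map (Sum.inl : ι → ι ⊕ (ℤ ⊕ (ℤ ⊕ ℤ))) ++
      S.map (fun j => (Sum.inr (Sum.inl j) : ι ⊕ (ℤ ⊕ (ℤ ⊕ ℤ)))) ++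
      T1.map (fun j => (Sum.inr (Sum.inr (Sum.inl j)) : ι ⊕ (ℤ ⊕ (ℤ ⊕ ℤ)))) ++
      T2.map (fun j => (Sum.inr (Sum.inr (Sum.inr j)) : ι ⊕ (ℤ ⊕ (ℤ ⊕ ℤ))))))
    (fun row col =>
      match row, col with
      | Sum.inl b, Sum.inl f => Qbf b f (u + (ξ : ℂ) * hbar)
      | Sum.inl b, Sum.inr (Sum.inl j) => Qb b (u + ((ξ + 2 * j - 1 : ℤ) : ℂ) * hbar)
      | Sum.inl b, Sum.inr (Sum.inr (Sum.inl j)) =>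
          Qb b (u + ((ξ + 2 * j - 1 : ℤ) : ℂ) * hbar)
      | Sum.inl _, Sum.inr (Sum.inr (Sum.inr _)) => 0
      | Sum.inr (Sum.inl b), Sum.inl f =>
          (-1 : ℂ) ^ η * Qbf b f (u + ((ξ - 2 * η : ℤ) : ℂ) * hbar)
      | Sum.inr (Sum.inl b), Sum.inr (Sum.inl j) =>
          Qb b (u + ((ξ + 2 * j - 1 : ℤ) : ℂ) * hbar)
      | Sum.inr (Sum.inl _), Sum.inr (Sum.inr (Sum.inl _)) => 0
      | Sum.inr (Sum.inl b), Sum.inr (Sum.inr (Sum.inr j)) =>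
          Qb b (u + ((ξ + 2 * j - 1 : ℤ) : ℂ) * hbar)
      | Sum.inr (Sum.inr r), Sum.inl f =>
          (-1 : ℂ) ^ (r - 1) * Qf f (u + ((ξ - 2 * r + 1 : ℤ) : ℂ) * hbar)
      | Sum.inr (Sum.inr _), Sum.inr _ => 0)

theorem listDet_map {α β γ δ : Type*} (rows : List α) (cols : List β) (φ : α → γ) (ψ : β → δ)
    (e : γ → δ → ℂ) :
    listDet (rows.map φ) (cols.map ψ) e = listDet rows cols (fun a b => e (φ a) (ψ b)) := by
  unfold listDet
  by_cases h : rows.length = cols.length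
  · rw [dif_pos (by simpa using h), dif_pos h]
    rw [← Matrix.det_submatrix_equiv_self (finCongr (List.length_map φ (as := rows)).symm)]
    congr 1
    ext i j
    simp
  · rw [dif_neg (by simpa using h), dif_neg h]

theorem listDet_col {α β : Type*} (rows : List α) (cols : List β) (e e₂ : α → β → ℂ)
    (s : α → ℂ) (g : β → ℂ) (c0 : β) (hc0 : c0 ∈ cols) (hg : g c0 = 0)
    (H : ∀ r ∈ rows, ∀ c ∈ cols, e r c = s r * e₂ r c + g c * (s r * e₂ r c0)) :
    listDet rows cols e = (rows.map s).prod * listDet rows cols e₂ := by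
  unfold listDet
  by_cases h : rows.length = cols.length
  · rw [dif_pos h, dif_pos h]
    have hp : (rows.map s).prod = ∏ i : Fin rows.length, s (rows.get i) := by
      rw [← List.prod_ofFn]
      congr 1
      apply List.ext_get <;> simp
    rw [hp, ← Matrix.det_mul_column]
    obtain ⟨k, hk⟩ := List.get_of_mem hc0
    rw [← Matrix.det_transpose, ← Matrix.det_transpose (Matrix.of _)]
    refine Matrix.det_eq_of_forall_row_eq_smul_add_const
      (fun j => g (cols.get (Fin.cast h j))) (Fin.cast h.symm k) ?_ ?_
    · rw [← hk] at hg
      simpa using hg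
    · intro i j
      have := H (rows.get j) (List.get_mem _ _) (cols.get (Fin.cast h i)) (List.get_mem _ _)
      rw [← hk] at this
      simpa using this
  · rw [dif_neg h, dif_neg h, mul_zero]

/-- **Shift lemma, part (ii).** -/
theorem shift_lemma_ii {ι : Type*} (hbar : ℂ) (hbar_ne : hbar ≠ 0)
    (Qb Qf : ι → ℂ → ℂ) (Qbf : ι → ι → ℂ → ℂ)
    (B1 B2 F : List ι) (hnd : (B1 ++ B2 ++ F).Nodup)
    (hQQ : ∀ b ∈ B1 ++ B2, ∀ f ∈ F, ∀ u : ℂ,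
      Qb b u * Qf f u = Qbf b f (u + hbar) - Qbf b f (u - hbar))
    (R S T1 T2 : List ℤ) (ξ : ℤ)
    (hlen : B1.length + B2.length + R.length =
      F.length + S.length + T1.length + T2.length)
    (hcase : (0 : ℤ) ∈ S) :
    ∀ u : ℂ,
      DeltaCF hbar Qb Qf Qbf B1 B2 F R S T1 T2 0 ξ u =
        (-1 : ℂ) ^ R.length *
          DeltaCF hbar Qb Qf Qbf B1 B2 F (R.map (fun r => r - 1)) (S.map (fun s => s + 1))
            (T1.map (fun t => t + 1)) (T2.map (fun t => t + 1)) 0 (ξ - 2) u := by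
  intro u
  unfold DeltaCF
  have hr : ∀ L : List ℤ, (L.map (fun r => r - 1)).map
      (fun r => (Sum.inr (Sum.inr r) : ι ⊕ (ι ⊕ ℤ))) =
      (L.map (fun r => (Sum.inr (Sum.inr r) : ι ⊕ (ι ⊕ ℤ)))).map
        (Sum.map id (Sum.map id (fun r : ℤ => r - 1))) := by
    intro L; simp
  have e1 : (B1.map (Sum.inl : ι → ι ⊕ (ι ⊕ ℤ)) ++
      B2.map (fun b => (Sum.inr (Sum.inl b) : ι ⊕ (ι ⊕ ℤ))) ++
      (R.map (fun r => r - 1)).map (fun r => (Sum.inr (Sum.inr r) : ι ⊕ (ι ⊕ ℤ)))) =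
      (B1.map (Sum.inl : ι → ι ⊕ (ι ⊕ ℤ)) ++
      B2.map (fun b => (Sum.inr (Sum.inl b) : ι ⊕ (ι ⊕ ℤ))) ++
      R.map (fun r => (Sum.inr (Sum.inr r) : ι ⊕ (ι ⊕ ℤ)))).map
        (Sum.map id (Sum.map id (fun r : ℤ => r - 1))) := by
    simp [Function.comp_def]
  have e2 : (F.map (Sum.inl : ι → ι ⊕ (ℤ ⊕ (ℤ ⊕ ℤ))) ++
      (S.map (fun s => s + 1)).map (fun j => (Sum.inr (Sum.inl j) : ι ⊕ (ℤ ⊕ (ℤ ⊕ ℤ)))) ++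
      (T1.map (fun s => s + 1)).map
        (fun j => (Sum.inr (Sum.inr (Sum.inl j)) : ι ⊕ (ℤ ⊕ (ℤ ⊕ ℤ)))) ++
      (T2.map (fun s => s + 1)).map
        (fun j => (Sum.inr (Sum.inr (Sum.inr j)) : ι ⊕ (ℤ ⊕ (ℤ ⊕ ℤ))))) =
      (F.map (Sum.inl : ι → ι ⊕ (ℤ ⊕ (ℤ ⊕ ℤ))) ++
      S.map (fun j => (Sum.inr (Sum.inl j) : ι ⊕ (ℤ ⊕ (ℤ ⊕ ℤ)))) ++
      T1.map (fun j => (Sum.inr (Sum.inr (Sum.inl j)) : ι ⊕ (ℤ ⊕ (ℤ ⊕ ℤ)))) ++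
      T2.map (fun j => (Sum.inr (Sum.inr (Sum.inr j)) : ι ⊕ (ℤ ⊕ (ℤ ⊕ ℤ))))).map
        (Sum.map id (Sum.map (fun s : ℤ => s + 1)
          (Sum.map (fun s : ℤ => s + 1) (fun s : ℤ => s + 1)))) := by
    simp [Function.comp_def]
  rw [e1, e2, listDet_map]
  have hs : (-1 : ℂ) ^ R.length = ((B1.map (Sum.inl : ι → ι ⊕ (ι ⊕ ℤ)) ++
      B2.map (fun b => (Sum.inr (Sum.inl b) : ι ⊕ (ι ⊕ ℤ))) ++
      R.map (fun r => (Sum.inr (Sum.inr r) : ι ⊕ (ι ⊕ ℤ)))).map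
        (Sum.elim (fun _ => (1 : ℂ)) (Sum.elim (fun _ => 1) (fun _ => -1)))).prod := by
    simp [Function.comp_def]
  rw [hs]
  have key : ∀ b ∈ B1 ++ B2, ∀ f ∈ F, Qbf b f (u + (ξ : ℂ) * hbar) =
      Qbf b f (u + ((ξ - 2 : ℤ) : ℂ) * hbar) +
      Qf f (u + ((ξ - 1 : ℤ) : ℂ) * hbar) * Qb b (u + ((ξ - 1 : ℤ) : ℂ) * hbar) := by
    intro b hb f hf
    have h := hQQ b hb f hf (u + ((ξ - 1 : ℤ) : ℂ) * hbar)
    have a1 : u + ((ξ - 1 : ℤ) : ℂ) * hbar + hbar = u + (ξ : ℂ) * hbar := by push_cast; ring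
    have a2 : u + ((ξ - 1 : ℤ) : ℂ) * hbar - hbar = u + ((ξ - 2 : ℤ) : ℂ) * hbar := by
      push_cast; ring
    rw [a1, a2] at h
    linear_combination -h
  have hj : ∀ j : ℤ, ξ - 2 + 2 * (j + 1) - 1 = ξ + 2 * j - 1 := fun j => by ring
  have hr2 : ∀ j : ℤ, ξ - 2 - 2 * (j - 1) + 1 = ξ - 2 * j + 1 := fun j => by ring
  have h0 : ξ + 2 * 0 - 1 = ξ - 1 := by ring
  apply listDet_col (g := Sum.elim (fun f => Qf f (u + ((ξ - 1 : ℤ) : ℂ) * hbar)) (fun _ => 0))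
    (c0 := Sum.inr (Sum.inl 0))
  · simpa using hcase
  · rfl
  · rintro (b | b | r) hb (f | j | j | j) hf <;>
      simp only [Sum.map_inl, Sum.map_inr, Sum.elim_inl, Sum.elim_inr, id, hj, hr2, h0,
        zero_mul, mul_zero, add_zero, one_mul, zpow_zero, sub_zero]
    · exact key b (by simp at hb; simp [hb]) f (by simpa using hf)
    · exact key b (by simp at hb; simp [hb]) f (by simpa using hf)
    · rw [zpow_sub_one₀ (by norm_num) (r - 1)]
      norm_num

end Stmt10
end

section
/- Shift lemma, part (iii). Suppose S = ∅, so that m+α = n+c1+c2. If t²_i = −η+1 for some 1 ≤ i ≤ c2, or r_j = η for some 1 ≤ j ≤ α, then Δ^{R,[η;ξ]}_{∅,T1,T2} = (−1)^{m2+c2} · Δ^{R,[η−1;ξ]}_{∅,T1,T2}. -/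
open scoped BigOperators

namespace Stmt11

/-- The integer segment tuple `⟨a,b⟩ = (a, a+1, …, b)`, empty when `b < a`. -/
def seg (a b : ℤ) : List ℤ := (List.range (b - a + 1).toNat).map (fun k => a + (k : ℤ))

/-- Product of `g x y` over ordered pairs `x ≺ y` in the list `L`. -/
def pairProd {ι : Type*} (L : List ι) (g : ι → ι → ℂ) : ℂ :=
  ∏ i : Fin L.length, ∏ j : Fin L.length, if i < j then g (L.get i) (L.get j) else 1

/-- Product of `g x` over a list. -/
def prodL {ι : Type*} (L : List ι) (g : ι → ℂ) : ℂ := (L.map g).prod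

/-- Product of `g x y` over pairs `(x, y) ∈ L × M`. -/
def prodLL {ι : Type*} (L M : List ι) (g : ι → ι → ℂ) : ℂ :=
  (L.map (fun x => (M.map (g x)).prod)).prod

/-- Determinant of the square matrix whose rows and columns are labelled by the given
key lists (by convention `0` if the two lists have different lengths). -/
noncomputable def listDet {α β : Type*} (rows : List α) (cols : List β) (e : α → β → ℂ) : ℂ :=
  if h : rows.length = cols.length then
    Matrix.det (Matrix.of fun i j : Fin rows.length =>
      e (rows.get i) (cols.get (Fin.cast h j)))
  else 0

/-- The coefficient-free sparse determinant `Δ^{R,[η;ξ]}_{S,T1,T2}` built from the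
coefficient-free Baxter Q-functions, as a function of the spectral parameter `u`. -/
noncomputable def DeltaCF {ι : Type*} (hbar : ℂ) (Qb Qf : ι → ℂ → ℂ) (Qbf : ι → ι → ℂ → ℂ)
    (B1 B2 F : List ι) (R S T1 T2 : List ℤ) (η ξ : ℤ) (u : ℂ) : ℂ :=
  listDet
    ((B1.map (Sum.inl : ι → ι ⊕ (ι ⊕ ℤ)) ++
      B2.map (fun b => (Sum.inr (Sum.inl b) : ι ⊕ (ι ⊕ ℤ))) ++
      R.map (fun r => (Sum.inr (Sum.inr r) : ι ⊕ (ι ⊕ ℤ)))))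
    ((F.map (Sum.inl : ι → ι ⊕ (ℤ ⊕ (ℤ ⊕ ℤ))) ++
      S.map (fun j => (Sum.inr (Sum.inl j) : ι ⊕ (ℤ ⊕ (ℤ ⊕ ℤ)))) ++
      T1.map (fun j => (Sum.inr (Sum.inr (Sum.inl j)) : ι ⊕ (ℤ ⊕ (ℤ ⊕ ℤ)))) ++
      T2.map (fun j => (Sum.inr (Sum.inr (Sum.inr j)) : ι ⊕ (ℤ ⊕ (ℤ ⊕ ℤ))))))
    (fun row col =>
      match row, col with
      | Sum.inl b, Sum.inl f => Qbf b f (u + (ξ : ℂ) * hbar)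
      | Sum.inl b, Sum.inr (Sum.inl j) => Qb b (u + ((ξ + 2 * j - 1 : ℤ) : ℂ) * hbar)
      | Sum.inl b, Sum.inr (Sum.inr (Sum.inl j)) =>
          Qb b (u + ((ξ + 2 * j - 1 : ℤ) : ℂ) * hbar)
      | Sum.inl _, Sum.inr (Sum.inr (Sum.inr _)) => 0
      | Sum.inr (Sum.inl b), Sum.inl f =>
          (-1 : ℂ) ^ η * Qbf b f (u + ((ξ - 2 * η : ℤ) : ℂ) * hbar)
      | Sum.inr (Sum.inl b), Sum.inr (Sum.inl j) =>
          Qb b (u + ((ξ + 2 * j - 1 : ℤ) : ℂ) * hbar)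
      | Sum.inr (Sum.inl _), Sum.inr (Sum.inr (Sum.inl _)) => 0
      | Sum.inr (Sum.inl b), Sum.inr (Sum.inr (Sum.inr j)) =>
          Qb b (u + ((ξ + 2 * j - 1 : ℤ) : ℂ) * hbar)
      | Sum.inr (Sum.inr r), Sum.inl f =>
          (-1 : ℂ) ^ (r - 1) * Qf f (u + ((ξ - 2 * r + 1 : ℤ) : ℂ) * hbar)
      | Sum.inr (Sum.inr _), Sum.inr _ => 0)

theorem prod_get_aux {α : Type*} (L : List α) (d : α → ℂ) :
    ∏ i : Fin L.length, d (L.get i) = (L.map d).prod := by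
  rw [← List.prod_ofFn]
  congr 1
  apply List.ext_get <;> simp

theorem listDet_scale {α β : Type*} (rows : List α) (cols : List β) (e : α → β → ℂ)
    (d1 : α → ℂ) (d2 : β → ℂ) :
    listDet rows cols (fun r s => d1 r * (d2 s * e r s)) =
      (rows.map d1).prod * (cols.map d2).prod * listDet rows cols e := by
  unfold listDet
  split_ifs with h
  · have h1 := Matrix.det_mul_column (fun i : Fin rows.length => d1 (rows.get i))
      (Matrix.of fun i j : Fin rows.length =>
        d2 (cols.get (Fin.cast h j)) * e (rows.get i) (cols.get (Fin.cast h j)))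
    have h2 := Matrix.det_mul_row (fun j : Fin rows.length => d2 (cols.get (Fin.cast h j)))
      (Matrix.of fun i j : Fin rows.length => e (rows.get i) (cols.get (Fin.cast h j)))
    have h3 : ∏ j : Fin rows.length, d2 (cols.get (Fin.cast h j)) = (cols.map d2).prod := by
      rw [← prod_get_aux]
      exact Fintype.prod_equiv (finCongr h) _ _ (fun _ => rfl)
    rw [prod_get_aux] at h1
    rw [h3] at h2
    simp only [Matrix.of_apply] at h1 h2
    rw [h1, h2, mul_assoc]
  · simp

theorem listDet_row {α β : Type*} (rows : List α) (cols : List β) (e e' : α → β → ℂ)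
    (c : α → ℂ) (k : α) (hk : k ∈ rows) (hc : c k = 0)
    (he : ∀ r ∈ rows, ∀ s ∈ cols, e r s = e' r s + c r * e' k s) :
    listDet rows cols e = listDet rows cols e' := by
  unfold listDet
  split_ifs with h
  · obtain ⟨i, rfl⟩ := List.mem_iff_get.1 hk
    refine Matrix.det_eq_of_forall_row_eq_smul_add_const (fun i => c (rows.get i)) i hc ?_
    intro a b
    exact he _ (List.get_mem _ _) _ (List.get_mem _ _)
  · rfl

theorem listDet_col {α β : Type*} (rows : List α) (cols : List β) (e e' : α → β → ℂ)
    (c : β → ℂ) (k : β) (hk : k ∈ cols) (hc : c k = 0)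
    (he : ∀ r ∈ rows, ∀ s ∈ cols, e r s = e' r s + c s * e' r k) :
    listDet rows cols e = listDet rows cols e' := by
  unfold listDet
  split_ifs with h
  · obtain ⟨i, rfl⟩ := List.mem_iff_get.1 hk
    rw [← Matrix.det_transpose, ← Matrix.det_transpose (Matrix.of fun i j : Fin rows.length =>
      e' (rows.get i) (cols.get (Fin.cast h j)))]
    refine Matrix.det_eq_of_forall_row_eq_smul_add_const
      (fun j => c (cols.get (Fin.cast h j))) (Fin.cast h.symm i) hc ?_
    intro a b
    exact he _ (List.get_mem _ _) _ (List.get_mem _ _)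
  · rfl

/-- Row signs: negate the rows labelled by `B2`. -/
def sgnRow {ι : Type*} : ι ⊕ (ι ⊕ ℤ) → ℂ
  | Sum.inr (Sum.inl _) => -1
  | _ => 1

/-- Column signs: negate the columns labelled by `T2`. -/
def sgnCol {ι : Type*} : ι ⊕ (ℤ ⊕ (ℤ ⊕ ℤ)) → ℂ
  | Sum.inr (Sum.inr (Sum.inr _)) => -1
  | _ => 1

/-- **Shift lemma, part (iii).** -/
theorem shift_lemma_iii {ι : Type*} (hbar : ℂ) (hbar_ne : hbar ≠ 0)
    (Qb Qf : ι → ℂ → ℂ) (Qbf : ι → ι → ℂ → ℂ)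
    (B1 B2 F : List ι) (hnd : (B1 ++ B2 ++ F).Nodup)
    (hQQ : ∀ b ∈ B1 ++ B2, ∀ f ∈ F, ∀ u : ℂ,
      Qb b u * Qf f u = Qbf b f (u + hbar) - Qbf b f (u - hbar))
    (R T1 T2 : List ℤ) (η ξ : ℤ)
    (hlen : B1.length + B2.length + R.length = F.length + T1.length + T2.length)
    (hcase : (-η + 1 : ℤ) ∈ T2 ∨ η ∈ R) :
    ∀ u : ℂ,
      DeltaCF hbar Qb Qf Qbf B1 B2 F R [] T1 T2 η ξ u =
        (-1 : ℂ) ^ (B2.length + T2.length) *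
          DeltaCF hbar Qb Qf Qbf B1 B2 F R [] T1 T2 (η - 1) ξ u := by
  intro u
  have hm : (-1 : ℂ) ^ (η - 1) = - (-1 : ℂ) ^ η := by
    rw [zpow_sub_one₀ (by norm_num)]; norm_num
  have hsq : (-1 : ℂ) ^ η * (-1 : ℂ) ^ η = 1 := by
    rw [← mul_zpow]; norm_num
  have key : ∀ b ∈ B2, ∀ f ∈ F, Qbf b f (u + ((ξ - 2 * η : ℤ) : ℂ) * hbar) =
      Qbf b f (u + ((ξ - 2 * (η - 1) : ℤ) : ℂ) * hbar) -
      Qb b (u + ((ξ - 2 * η + 1 : ℤ) : ℂ) * hbar) *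
        Qf f (u + ((ξ - 2 * η + 1 : ℤ) : ℂ) * hbar) := by
    intro b hb f hf
    rw [hQQ b (by simp [hb]) f hf]
    have e1 : u + ((ξ - 2 * η + 1 : ℤ) : ℂ) * hbar + hbar =
      u + ((ξ - 2 * (η - 1) : ℤ) : ℂ) * hbar := by push_cast; ring
    have e2 : u + ((ξ - 2 * η + 1 : ℤ) : ℂ) * hbar - hbar =
      u + ((ξ - 2 * η : ℤ) : ℂ) * hbar := by push_cast; ring
    rw [e1, e2]; ring
  have hs : ∀ (rows : List (ι ⊕ (ι ⊕ ℤ))) (cols : List (ι ⊕ (ℤ ⊕ (ℤ ⊕ ℤ))))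
      (e : ι ⊕ (ι ⊕ ℤ) → ι ⊕ (ℤ ⊕ (ℤ ⊕ ℤ)) → ℂ) (p : ℕ),
      (rows.map sgnRow).prod * (cols.map sgnCol).prod = (-1 : ℂ) ^ p →
      (-1 : ℂ) ^ p * listDet rows cols e =
        listDet rows cols (fun r s => sgnRow r * (sgnCol s * e r s)) := by
    intro rows cols e p h
    rw [listDet_scale, h]
  unfold DeltaCF
  rw [hs _ _ _ (B2.length + T2.length) (by
    simp [Function.comp_def, sgnRow, sgnCol, pow_add])]
  rcases hcase with hT | hR
  · refine listDet_col _ _ _ _ (fun s => match s with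
      | Sum.inl f => -((-1 : ℂ) ^ η * Qf f (u + ((ξ - 2 * η + 1 : ℤ) : ℂ) * hbar))
      | _ => 0) (Sum.inr (Sum.inr (Sum.inr (-η + 1)))) (by simp [hT]) rfl ?_
    have e3 : ξ + 2 * (-η + 1) - 1 = ξ - 2 * η + 1 := by ring
    rintro (b | b | r) hr (f | j | j | j) hs' <;>
      simp [sgnRow, sgnCol, -Int.cast_add, -Int.cast_sub, -Int.cast_mul] at hr hs' ⊢
    rw [key b hr f hs', hm, e3]
    ring
  · refine listDet_row _ _ _ _ (fun r => match r with
      | Sum.inr (Sum.inl b) => Qb b (u + ((ξ - 2 * η + 1 : ℤ) : ℂ) * hbar)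
      | _ => 0) (Sum.inr (Sum.inr η)) (by simp [hR]) rfl ?_
    rintro (b | b | r) hr (f | j | j | j) hs' <;>
      simp [sgnRow, sgnCol, -Int.cast_add, -Int.cast_sub, -Int.cast_mul] at hr hs' ⊢
    rw [key b hr f hs', hm]
    ring

end Stmt11
end

section
/- Bilinear determinant identity on the line a = s+η1 (case (i) of the Hirota proof). Assume m1 ≥ 1 and n ≥ 1, and let s be an integer with max{−η1, η2}+1 ≤ s ≤ n1. Then, pointwise on ℂ, Δ^{⟨1,s−η2⟩,[0;0]}_{∅,⟨1,s+η1⟩,∅} · Δ^{⟨1,s−η2⟩,[0;2]}_{∅,⟨1,s+η1⟩,∅} = (−1)^{η1+n2+1} · ( Δ^{⟨2,s−η2⟩,[1;2]}_{∅,⟨1,s+η1−1⟩,∅} · Δ^{⟨1,s−η2⟩,[0;0]}_{∅,⟨2,s+η1+1⟩,∅} + Δ^{⟨2,s−η2+1⟩,[1;2]}_{∅,⟨1,s+η1⟩,∅} · Δ^{⟨1,s−η2−1⟩,[0;0]}_{∅,⟨2,s+η1⟩,∅} ). -/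
open scoped BigOperators

namespace Stmt12

/-- The integer segment tuple `⟨a,b⟩ = (a, a+1, …, b)`, empty when `b < a`. -/
def seg (a b : ℤ) : List ℤ := (List.range (b - a + 1).toNat).map (fun k => a + (k : ℤ))

/-- Product of `g x y` over ordered pairs `x ≺ y` in the list `L`. -/
def pairProd {ι : Type*} (L : List ι) (g : ι → ι → ℂ) : ℂ :=
  ∏ i : Fin L.length, ∏ j : Fin L.length, if i < j then g (L.get i) (L.get j) else 1

/-- Product of `g x` over a list. -/
def prodL {ι : Type*} (L : List ι) (g : ι → ℂ) : ℂ := (L.map g).prod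

/-- Product of `g x y` over pairs `(x, y) ∈ L × M`. -/
def prodLL {ι : Type*} (L M : List ι) (g : ι → ι → ℂ) : ℂ :=
  (L.map (fun x => (M.map (g x)).prod)).prod

/-- Determinant of the square matrix whose rows and columns are labelled by the given
key lists (by convention `0` if the two lists have different lengths). -/
noncomputable def listDet {α β : Type*} (rows : List α) (cols : List β) (e : α → β → ℂ) : ℂ :=
  if h : rows.length = cols.length then
    Matrix.det (Matrix.of fun i j : Fin rows.length =>
      e (rows.get i) (cols.get (Fin.cast h j)))
  else 0

/-- The coefficient-free sparse determinant `Δ^{R,[η;ξ]}_{S,T1,T2}` built from the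
coefficient-free Baxter Q-functions, as a function of the spectral parameter `u`. -/
noncomputable def DeltaCF {ι : Type*} (hbar : ℂ) (Qb Qf : ι → ℂ → ℂ) (Qbf : ι → ι → ℂ → ℂ)
    (B1 B2 F : List ι) (R S T1 T2 : List ℤ) (η ξ : ℤ) (u : ℂ) : ℂ :=
  listDet
    ((B1.map (Sum.inl : ι → ι ⊕ (ι ⊕ ℤ)) ++
      B2.map (fun b => (Sum.inr (Sum.inl b) : ι ⊕ (ι ⊕ ℤ))) ++
      R.map (fun r => (Sum.inr (Sum.inr r) : ι ⊕ (ι ⊕ ℤ)))))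
    ((F.map (Sum.inl : ι → ι ⊕ (ℤ ⊕ (ℤ ⊕ ℤ))) ++
      S.map (fun j => (Sum.inr (Sum.inl j) : ι ⊕ (ℤ ⊕ (ℤ ⊕ ℤ)))) ++
      T1.map (fun j => (Sum.inr (Sum.inr (Sum.inl j)) : ι ⊕ (ℤ ⊕ (ℤ ⊕ ℤ)))) ++
      T2.map (fun j => (Sum.inr (Sum.inr (Sum.inr j)) : ι ⊕ (ℤ ⊕ (ℤ ⊕ ℤ))))))
    (fun row col =>
      match row, col with
      | Sum.inl b, Sum.inl f => Qbf b f (u + (ξ : ℂ) * hbar)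
      | Sum.inl b, Sum.inr (Sum.inl j) => Qb b (u + ((ξ + 2 * j - 1 : ℤ) : ℂ) * hbar)
      | Sum.inl b, Sum.inr (Sum.inr (Sum.inl j)) =>
          Qb b (u + ((ξ + 2 * j - 1 : ℤ) : ℂ) * hbar)
      | Sum.inl _, Sum.inr (Sum.inr (Sum.inr _)) => 0
      | Sum.inr (Sum.inl b), Sum.inl f =>
          (-1 : ℂ) ^ η * Qbf b f (u + ((ξ - 2 * η : ℤ) : ℂ) * hbar)
      | Sum.inr (Sum.inl b), Sum.inr (Sum.inl j) =>
          Qb b (u + ((ξ + 2 * j - 1 : ℤ) : ℂ) * hbar)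
      | Sum.inr (Sum.inl _), Sum.inr (Sum.inr (Sum.inl _)) => 0
      | Sum.inr (Sum.inl b), Sum.inr (Sum.inr (Sum.inr j)) =>
          Qb b (u + ((ξ + 2 * j - 1 : ℤ) : ℂ) * hbar)
      | Sum.inr (Sum.inr r), Sum.inl f =>
          (-1 : ℂ) ^ (r - 1) * Qf f (u + ((ξ - 2 * r + 1 : ℤ) : ℂ) * hbar)
      | Sum.inr (Sum.inr _), Sum.inr _ => 0)

theorem dj_aux {R : Type*} [CommRing R] {k : ℕ}
    (A : Matrix (Fin (k+2)) (Fin (k+2)) R) :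
    A.det * (A.det * (A.submatrix (fun i : Fin k => i.succ.succ)
      (fun i : Fin k => i.succ.succ)).det) =
    A.det * (A.adjugate 0 0 * A.adjugate 1 1 - A.adjugate 0 1 * A.adjugate 1 0) := by
  let K : Matrix (Fin (k+2)) (Fin (k+2)) R := Matrix.of fun i j =>
    if j = 0 ∨ j = 1 then A.adjugate i j else (1 : Matrix _ _ R) i j
  have h10 : (1 : Fin (k+2)) = Fin.succ 0 := rfl
  have hz : ∀ (i : Fin k), (i.succ.succ = (1 : Fin (k+2))) = False := by
    intro i; rw [h10, Fin.succ_inj]; simp [Fin.succ_ne_zero]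
  have hz' : ∀ (i : Fin k), ((1 : Fin (k+2)) = i.succ.succ) = False := by
    intro i; rw [← hz i]; exact propext eq_comm
  have hK : K.det = A.adjugate 0 0 * A.adjugate 1 1 - A.adjugate 0 1 * A.adjugate 1 0 := by
    let e : Fin 2 ⊕ Fin k ≃ Fin (k+2) := finSumFinEquiv.trans (finCongr (add_comm 2 k))
    have e0 : e (Sum.inl 0) = 0 := rfl
    have e1 : e (Sum.inl 1) = 1 := by ext; simp [e, finSumFinEquiv]
    have e2 : ∀ i, e (Sum.inr i) = i.succ.succ := by
      intro i; ext; simp [e, finSumFinEquiv]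
    rw [← Matrix.det_submatrix_equiv_self e, ← Matrix.fromBlocks_toBlocks (K.submatrix e e)]
    have h12 : (K.submatrix e e).toBlocks₁₂ = 0 := by
      ext i j
      fin_cases i
      · simp [Matrix.toBlocks₁₂, e0, e2, K, hz, (Fin.succ_ne_zero _).symm]
      · simp [Matrix.toBlocks₁₂, e1, e2, K, hz, hz', Matrix.one_apply]
    have h22 : (K.submatrix e e).toBlocks₂₂ = 1 := by
      ext i j
      simp [Matrix.toBlocks₂₂, e2, K, hz, Matrix.one_apply]
    rw [h12, h22, Matrix.det_fromBlocks_zero₁₂, Matrix.det_one, mul_one, Matrix.det_fin_two]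
    simp [Matrix.toBlocks₁₁, e0, e1, K]
  have hAK : A * K = Matrix.of fun i j =>
    if j = 0 ∨ j = 1 then (if i = j then A.det else 0) else A i j := by
    ext i j
    by_cases h : j = 0 ∨ j = 1
    · have := congrFun (congrFun (Matrix.mul_adjugate A) i) j
      simp only [Matrix.mul_apply, K, Matrix.of_apply, h, if_true] at this ⊢
      rw [this]; simp [Matrix.one_apply]
    · simp only [Matrix.mul_apply, K, Matrix.of_apply, h, if_false, Matrix.one_apply]
      simp
  have h2 : (A * K).det = A.det * (A.det * (A.submatrix (fun i : Fin k => i.succ.succ) (fun i : Fin k => i.succ.succ)).det) := by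
    rw [hAK]
    generalize A.det = D
    rw [Matrix.det_succ_column_zero, Fin.sum_univ_succ, Finset.sum_eq_zero, Matrix.det_succ_column_zero, Fin.sum_univ_succ, Finset.sum_eq_zero]
    · simp [Matrix.submatrix, hz]
    · intro i _
      simp [hz]
    · intro i _
      simp
  rw [← h2, Matrix.det_mul, hK]

theorem dj {k : ℕ} (A : Matrix (Fin (k+2)) (Fin (k+2)) ℂ) :
    A.det * (A.submatrix (fun i : Fin k => i.succ.succ) (fun i : Fin k => i.succ.succ)).det =
    A.adjugate 0 0 * A.adjugate 1 1 - A.adjugate 0 1 * A.adjugate 1 0 := by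
  have h := dj_aux (Matrix.mvPolynomialX (Fin (k+2)) (Fin (k+2)) ℤ)
  have h1 := mul_left_cancel₀ (Matrix.det_mvPolynomialX_ne_zero (Fin (k+2)) ℤ) h
  let φ : MvPolynomial (Fin (k+2) × Fin (k+2)) ℤ →+* ℂ :=
    (MvPolynomial.aeval fun p : Fin (k+2) × Fin (k+2) => A p.1 p.2).toRingHom
  have hA : φ.mapMatrix (Matrix.mvPolynomialX (Fin (k+2)) (Fin (k+2)) ℤ) = A := by
    ext i j; simp [φ, Matrix.mvPolynomialX]
  have hadj : ∀ i j, φ ((Matrix.mvPolynomialX (Fin (k+2)) (Fin (k+2)) ℤ).adjugate i j)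
      = A.adjugate i j := by
    intro i j
    rw [← congrArg Matrix.adjugate hA, ← RingHom.map_adjugate]; rfl
  have h3 := congrArg φ h1
  rw [map_mul, map_sub, map_mul, map_mul, RingHom.map_det, RingHom.map_det, hA, hadj, hadj,
    hadj, hadj] at h3
  rw [← h3]
  congr 2
  rw [← hA]; rfl

theorem listDet_of {α β : Type*} {X : List α} {Y : List β} (h : X.length = Y.length)
    (e : α → β → ℂ) : listDet X Y e = Matrix.det (Matrix.of fun i j : Fin X.length =>
      e (X.get i) (Y.get (Fin.cast h j))) := by
  rw [listDet, dif_pos h]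

theorem listDet_of_ne {α β : Type*} {X : List α} {Y : List β} (h : X.length ≠ Y.length)
    (e : α → β → ℂ) : listDet X Y e = 0 := by
  rw [listDet, dif_neg h]

theorem listDet_fin {α β : Type*} {X : List α} {Y : List β} {k : ℕ} (hX : X.length = k)
    (hY : Y.length = k)
    (e : α → β → ℂ) : listDet X Y e = Matrix.det (Matrix.of fun i j : Fin k =>
      e (X.get (Fin.cast hX.symm i)) (Y.get (Fin.cast hY.symm j))) := by
  subst hX
  rw [listDet_of hY.symm]; rfl

theorem listDet_congr {α β : Type*} {X : List α} {Y : List β}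
    {e e' : α → β → ℂ} (h : ∀ x ∈ X, ∀ y ∈ Y, e x y = e' x y) :
    listDet X Y e = listDet X Y e' := by
  unfold listDet
  split_ifs with hl
  · congr 1
    ext i j
    exact h _ (List.get_mem _ _) _ (List.get_mem _ _)
  · rfl

theorem listDet_flip {α β : Type*} (X : List α) (Y : List β) (e : α → β → ℂ) :
    listDet X Y e = listDet Y X (fun y x => e x y) := by
  by_cases h : X.length = Y.length
  · rw [listDet_fin rfl h.symm, listDet_fin h.symm rfl, ← Matrix.det_transpose]
    rfl
  · rw [listDet_of_ne h, listDet_of_ne (Ne.symm h)]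

theorem listDet_map {α β α' β' : Type*} (X : List α) (Y : List β) (f : α → α') (g : β → β')
    (e : α' → β' → ℂ) :
    listDet (X.map f) (Y.map g) e = listDet X Y (fun x y => e (f x) (g y)) := by
  by_cases h : X.length = Y.length
  · rw [listDet_fin (k := X.length) (by simp) (by simp [h]), listDet_fin rfl h.symm]
    congr 1
    ext i j
    simp
  · rw [listDet_of_ne h, listDet_of_ne (by simpa using h)]

theorem listDet_scale {α β : Type*} (X : List α) (Y : List β) (s : α → ℂ) (e : α → β → ℂ) :
    listDet X Y (fun x y => s x * e x y) = (X.map s).prod * listDet X Y e := by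
  by_cases h : X.length = Y.length
  · rw [listDet_of h, listDet_of h]
    have := Matrix.det_mul_column (fun i => s (X.get i)) (Matrix.of fun i j : Fin X.length =>
      e (X.get i) (Y.get (Fin.cast h j)))
    simp only [Matrix.of_apply] at this
    rw [this]
    congr 1
    rw [← List.prod_ofFn]
    congr 1
    apply List.ext_getElem <;> simp
  · rw [listDet_of_ne h, listDet_of_ne h, mul_zero]

theorem listDet_rowop {α β : Type*} (a : α) (X : List α) (Y : List β) (t : α → ℂ)
    (e e' : α → β → ℂ) (h0 : ∀ y ∈ Y, e' a y = e a y)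
    (h1 : ∀ x ∈ X, ∀ y ∈ Y, e' x y = e x y + t x * e a y) :
    listDet (a :: X) Y e' = listDet (a :: X) Y e := by
  by_cases h : (a :: X).length = Y.length
  · rw [listDet_of h, listDet_of h]
    refine Matrix.det_eq_of_forall_row_eq_smul_add_const
      (Fin.cons (n := X.length) 0 (fun i => t (X.get i)) : Fin (X.length + 1) → ℂ) (0 : Fin (X.length + 1)) rfl ?_
    intro i j
    refine Fin.cases (n := X.length) ?_ (fun i => ?_) i
    · simpa using h0 _ (List.get_mem _ (Fin.cast h j))
    · simpa using h1 _ (List.get_mem _ i) _ (List.get_mem _ (Fin.cast h j))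
  · rw [listDet_of_ne h, listDet_of_ne h]

theorem listDet_zero_col {α β : Type*} (a : α) (X : List α) (c : β) (Y : List β)
    (e : α → β → ℂ) (h0 : ∀ x ∈ X, e x c = 0) :
    listDet (a :: X) (c :: Y) e = e a c * listDet X Y e := by
  by_cases h : X.length = Y.length
  · rw [listDet_fin (k := X.length + 1) (by simp) (by simp [h]), listDet_fin rfl h.symm,
      Matrix.det_succ_column_zero, Fin.sum_univ_succ, Finset.sum_eq_zero]
    · simp [Matrix.submatrix]
    · intro i _
      simp [h0]
  · rw [listDet_of_ne h, listDet_of_ne (by simpa using h), mul_zero]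

theorem listDet_schur {α β : Type*} (a : α) (X : List α) (c : β) (Y : List β)
    (e : α → β → ℂ) (ha : a ∉ X) (h0 : e a c = -1) :
    listDet (a :: X) (c :: Y) e = - listDet X Y (fun x y => e x y + e x c * e a y) := by
  classical
  rw [← listDet_rowop a X (c :: Y) (fun x => e x c) e
    (fun x y => if x = a then e a y else e x y + e x c * e a y), listDet_zero_col]
  · simp only [if_true, h0, neg_mul, one_mul, neg_inj]
    refine listDet_congr fun x hx y _ => ?_
    rw [if_neg]; rintro rfl; exact ha hx
  · intro x hx
    rw [if_neg, h0]
    · ring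
    · rintro rfl; exact ha hx
  · simp
  · intro x hx y _
    rw [if_neg]
    rintro rfl; exact ha hx

theorem listDet_swap {α β : Type*} (a b : α) (X : List α) (Y : List β)
    (e : α → β → ℂ) :
    listDet (a :: b :: X) Y e = - listDet (b :: a :: X) Y e := by
  by_cases h : (a :: b :: X).length = Y.length
  · rw [listDet_fin (k := X.length + 2) (by simp) (by simpa using h.symm),
      listDet_fin (k := X.length + 2) (by simp) (by simpa using h.symm)]
    have := Matrix.det_permute (Equiv.swap (0 : Fin (X.length+2)) 1) (Matrix.of fun i j : Fin (X.length+2) =>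
      e ((b :: a :: X).get (Fin.cast (by simp) i)) (Y.get (Fin.cast (by simpa using h) j)))
    rw [Equiv.Perm.sign_swap (by simp)] at this
    simp only [Units.val_neg, Units.val_one, Int.cast_neg, Int.cast_one, neg_mul, one_mul] at this
    rw [← this]
    congr 1
    ext i j
    refine Fin.cases ?_ (fun i => ?_) i
    · simp
    · refine Fin.cases ?_ (fun i => ?_) i
      · simp
      · rw [Matrix.submatrix_apply, Equiv.swap_apply_of_ne_of_ne (Fin.succ_ne_zero _)]
        · simp
        · intro h
          exact Fin.succ_ne_zero _ (Fin.succ_injective _ h)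
  · rw [listDet_of_ne h, listDet_of_ne (by simpa using h), neg_zero]

theorem listDet_cons {α β : Type*} (x : α) (P : List α) (Y : List β) (e : α → β → ℂ)
    (h : (x :: P).length = Y.length) :
    listDet (x :: P) Y e = ∑ j : Fin (P.length + 1), (-1) ^ (j : ℕ) *
      e x (Y.get (Fin.cast h j)) * listDet P (Y.eraseIdx j) e := by
  rw [listDet_of h]
  refine (Matrix.det_succ_row_zero (n := P.length) _).trans ?_
  refine Finset.sum_congr rfl fun j _ => ?_
  have hj : (j : ℕ) < Y.length := by rw [← h]; exact j.2
  have hl : (Y.eraseIdx j).length = P.length := by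
    rw [List.length_eraseIdx_of_lt hj, ← h]; simp
  rw [listDet_fin rfl hl]
  congr 2
  ext i k
  simp only [Matrix.submatrix_apply, Matrix.of_apply, List.get_eq_getElem]
  congr 1
  simp only [Fin.val_cast, List.getElem_eraseIdx, Fin.succAbove, Fin.lt_def]
  by_cases hh : (k : ℕ) < j <;> simp [hh]

theorem listDet_move {α β : Type*} (a : α) (L : List α) : ∀ (M : List α) (Y : List β)
    (e : α → β → ℂ),
    listDet (L ++ a :: M) Y e = (-1) ^ L.length * listDet (a :: (L ++ M)) Y e := by
  induction L with
  | nil => intro M Y e; simp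
  | cons x L ih =>
    intro M Y e
    by_cases h : (x :: (L ++ a :: M)).length = Y.length
    · have : listDet (x :: (L ++ a :: M)) Y e = (-1) ^ L.length * listDet (x :: a :: (L ++ M)) Y e := by
        rw [listDet_cons _ _ _ _ h, listDet_cons _ _ _ _ (by rw [← h]; simp; omega), Finset.mul_sum]
        simp only [ih]
        refine Fintype.sum_equiv (finCongr (by simp; omega)) _ _ fun j => ?_
        simp
        ring
      rw [List.cons_append, this, listDet_swap]
      simp [pow_succ]
    · rw [listDet_of_ne (by simpa using h), listDet_of_ne, mul_zero]
      intro h2; apply h; rw [← h2]; simp; omega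

theorem listDet_move_col {α β : Type*} (X : List α) (c : β) (L M : List β)
    (e : α → β → ℂ) :
    listDet X (L ++ c :: M) e = (-1) ^ L.length * listDet X (c :: (L ++ M)) e := by
  rw [listDet_flip, listDet_move, ← listDet_flip]

theorem get_succAbove_one {γ : Type*} (x y : γ) (Z : List γ) (k : ℕ)
    (h1 : k + 1 + 1 = (x :: y :: Z).length) (h2 : k + 1 = (x :: Z).length)
    (i : Fin (k + 1)) :
    (x :: y :: Z).get (Fin.cast h1 (Fin.succAbove 1 i)) = (x :: Z).get (Fin.cast h2 i) := by
  refine Fin.cases ?_ (fun i => ?_) i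
  · simp
  · simp

theorem listDet_dj {α β : Type*} (a b : α) (X : List α) (c d : β) (Y : List β)
    (e : α → β → ℂ) (h : X.length = Y.length) :
    listDet (a :: b :: X) (c :: d :: Y) e * listDet X Y e =
      listDet (a :: X) (c :: Y) e * listDet (b :: X) (d :: Y) e -
      listDet (a :: X) (d :: Y) e * listDet (b :: X) (c :: Y) e := by
  have H := dj (Matrix.of fun i j : Fin (X.length+2) =>
      e ((a :: b :: X).get (Fin.cast (by simp) i)) ((c :: d :: Y).get (Fin.cast (by simp [h]) j)))
  simp only [Matrix.adjugate_fin_succ_eq_det_submatrix] at H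
  rw [listDet_fin (k := X.length + 2) (by simp) (by simp [h]), listDet_fin rfl h.symm,
    listDet_fin (k := X.length + 1) (by simp) (by simp [h]),
    listDet_fin (k := X.length + 1) (by simp) (by simp [h]),
    listDet_fin (k := X.length + 1) (by simp) (by simp [h]),
    listDet_fin (k := X.length + 1) (by simp) (by simp [h])]
  have E : ∀ i j : Fin (X.length + 1), e ((a :: X).get (Fin.cast (by simp) i)) ((c :: Y).get (Fin.cast (by simp [h]) j)) = e ((a :: b :: X).get (Fin.cast (by simp) (Fin.succAbove (1 : Fin (X.length + 2)) i)))
      ((c :: d :: Y).get (Fin.cast (by simp [h]) (Fin.succAbove (1 : Fin (X.length + 2)) j))) := by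
    intro i j
    rw [get_succAbove_one _ _ _ _ _ (by simp), get_succAbove_one _ _ _ _ _ (by simp [h])]
  have E' : ∀ i j : Fin (X.length + 1), e ((a :: X).get (Fin.cast (by simp) i)) ((d :: Y).get (Fin.cast (by simp [h]) j)) = e ((a :: b :: X).get (Fin.cast (by simp) (Fin.succAbove (1 : Fin (X.length + 2)) i)))
      ((d :: Y).get (Fin.cast (by simp [h]) j)) := by
    intro i j
    rw [get_succAbove_one _ _ _ _ _ (by simp)]
  have E'' : ∀ i j : Fin (X.length + 1), e ((b :: X).get (Fin.cast (by simp) i)) ((c :: Y).get (Fin.cast (by simp [h]) j)) = e ((b :: X).get (Fin.cast (by simp) i))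
      ((c :: d :: Y).get (Fin.cast (by simp [h]) (Fin.succAbove (1 : Fin (X.length + 2)) j))) := by
    intro i j
    rw [get_succAbove_one _ _ _ _ _ (by simp [h])]
  simp only [E, E', E'']
  simp only [Fin.val_zero, Fin.val_one] at H
  refine H.trans ?_
  norm_num
  rw [mul_comm]
  rfl

theorem seg_eq (a b : ℤ) :
    seg a b = List.map (fun k : ℕ => a + (k : ℤ)) (List.range (b - a + 1).toNat) := by
  rw [List.map_eq_flatMap]
  simp [seg, List.map_flatMap]

theorem mem_seg {a b x : ℤ} : x ∈ seg a b ↔ a ≤ x ∧ x ≤ b := by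
  simp only [seg_eq, List.mem_map, List.mem_range]
  constructor
  · rintro ⟨k, hk, rfl⟩; omega
  · rintro ⟨h1, h2⟩
    exact ⟨(x - a).toNat, by omega, by omega⟩

theorem length_seg (a b : ℤ) : (seg a b).length = (b - a + 1).toNat := by simp [seg_eq]

theorem seg_map (a b k : ℤ) : (seg a b).map (fun r => r + k) = seg (a + k) (b + k) := by
  simp only [seg_eq, List.map_map]
  rw [show b + k - (a + k) + 1 = b - a + 1 by ring]
  refine List.map_congr_left fun i _ => ?_
  simp; ring

theorem seg_cons {a b : ℤ} (h : a ≤ b) : seg a b = a :: seg (a + 1) b := by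
  simp only [seg_eq]
  rw [show (b - a + 1).toNat = (b - (a + 1) + 1).toNat + 1 by omega, List.range_succ_eq_map]
  simp only [List.map_cons, List.map_map, Nat.cast_zero, add_zero]
  congr 1
  refine List.map_congr_left fun i _ => ?_
  simp; ring

theorem seg_snoc {a b : ℤ} (h : a ≤ b) : seg a b = seg a (b - 1) ++ [b] := by
  simp only [seg_eq]
  rw [show (b - a + 1).toNat = (b - 1 - a + 1).toNat + 1 by omega, List.range_succ]
  simp only [List.map_append, List.map_cons, List.map_nil]
  congr 2
  omega

def rowsL {ι : Type*} (B1 B2 : List ι) (R : List ℤ) : List (ι ⊕ (ι ⊕ ℤ)) :=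
  B1.map Sum.inl ++ B2.map (fun b => Sum.inr (Sum.inl b)) ++ R.map (fun r => Sum.inr (Sum.inr r))

def colsL {ι : Type*} (F : List ι) (T : List ℤ) : List (ι ⊕ ℤ) :=
  F.map Sum.inl ++ T.map Sum.inr

noncomputable def dE {ι : Type*} (hbar : ℂ) (Qb Qf : ι → ℂ → ℂ) (Qbf : ι → ι → ℂ → ℂ)
    (k l η ξ : ℤ) (u : ℂ) : (ι ⊕ (ι ⊕ ℤ)) → (ι ⊕ ℤ) → ℂ
  | Sum.inl b, Sum.inl f => Qbf b f (u + (ξ : ℂ) * hbar)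
  | Sum.inl b, Sum.inr j => Qb b (u + ((ξ + 2 * (j + l) - 1 : ℤ) : ℂ) * hbar)
  | Sum.inr (Sum.inl b), Sum.inl f => (-1 : ℂ) ^ η * Qbf b f (u + ((ξ - 2 * η : ℤ) : ℂ) * hbar)
  | Sum.inr (Sum.inl _), Sum.inr _ => 0
  | Sum.inr (Sum.inr r), Sum.inl f =>
      (-1 : ℂ) ^ (r + k - 1) * Qf f (u + ((ξ - 2 * (r + k) + 1 : ℤ) : ℂ) * hbar)
  | Sum.inr (Sum.inr _), Sum.inr _ => 0

noncomputable def baseE {ι : Type*} (hbar : ℂ) (Qb Qf : ι → ℂ → ℂ) (Qbf : ι → ι → ℂ → ℂ)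
    (u : ℂ) : (ι ⊕ (ι ⊕ ℤ)) → (ι ⊕ ℤ) → ℂ
  | Sum.inl b, Sum.inl f => Qbf b f u
  | Sum.inl b, Sum.inr j => Qb b (u + ((2 * j - 1 : ℤ) : ℂ) * hbar)
  | Sum.inr (Sum.inl b), Sum.inl f => Qbf b f u
  | Sum.inr (Sum.inl _), Sum.inr _ => 0
  | Sum.inr (Sum.inr r), Sum.inl f => Qf f (u + ((1 - 2 * r : ℤ) : ℂ) * hbar)
  | Sum.inr (Sum.inr r), Sum.inr j => if r = 0 ∧ j = 1 then -1 else 0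

/-- Row signs; `σ` is the sign of the `B2` rows, `k` the shift of the `R` rows. -/
noncomputable def rs {ι : Type*} (σ : ℂ) (k : ℤ) : (ι ⊕ (ι ⊕ ℤ)) → ℂ
  | Sum.inl _ => 1
  | Sum.inr (Sum.inl _) => σ
  | Sum.inr (Sum.inr r) => (-1) ^ (r + k - 1)

/-- Row-operation coefficients. -/
noncomputable def rt {ι : Type*} (hbar : ℂ) (Qb : ι → ℂ → ℂ) (u : ℂ) : (ι ⊕ (ι ⊕ ℤ)) → ℂ
  | Sum.inl b => Qb b (u + hbar)
  | Sum.inr (Sum.inl b) => Qb b (u + hbar)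
  | Sum.inr (Sum.inr _) => 0

theorem delta_shift {ι : Type*} (hbar : ℂ) (Qb Qf : ι → ℂ → ℂ) (Qbf : ι → ι → ℂ → ℂ)
    (B1 B2 F : List ι) (R T : List ℤ) (k l η ξ : ℤ) (u : ℂ) :
    DeltaCF hbar Qb Qf Qbf B1 B2 F (R.map (fun r => r + k)) [] (T.map (fun r => r + l)) [] η ξ u =
      listDet (rowsL B1 B2 R) (colsL F T) (dE hbar Qb Qf Qbf k l η ξ u) := by
  let f : (ι ⊕ (ι ⊕ ℤ)) → (ι ⊕ (ι ⊕ ℤ)) := Sum.map id (Sum.map id (fun r => r + k))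
  let g : (ι ⊕ ℤ) → (ι ⊕ (ℤ ⊕ (ℤ ⊕ ℤ))) :=
    Sum.elim Sum.inl (fun j => Sum.inr (Sum.inr (Sum.inl (j + l))))
  have hf : (rowsL B1 B2 R).map f = (B1.map (Sum.inl : ι → ι ⊕ (ι ⊕ ℤ)) ++
      B2.map (fun b => (Sum.inr (Sum.inl b) : ι ⊕ (ι ⊕ ℤ))) ++
      (R.map (fun r => r + k)).map (fun r => (Sum.inr (Sum.inr r) : ι ⊕ (ι ⊕ ℤ)))) := by
    simp [rowsL, f, Function.comp_def]
  have hg : (colsL F T).map g = (F.map (Sum.inl : ι → ι ⊕ (ℤ ⊕ (ℤ ⊕ ℤ))) ++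
      ([] : List ℤ).map (fun j => (Sum.inr (Sum.inl j) : ι ⊕ (ℤ ⊕ (ℤ ⊕ ℤ)))) ++
      (T.map (fun r => r + l)).map
        (fun j => (Sum.inr (Sum.inr (Sum.inl j)) : ι ⊕ (ℤ ⊕ (ℤ ⊕ ℤ)))) ++
      ([] : List ℤ).map (fun j => (Sum.inr (Sum.inr (Sum.inr j)) : ι ⊕ (ℤ ⊕ (ℤ ⊕ ℤ))))) := by
    simp [colsL, g, Function.comp_def]
  unfold DeltaCF
  rw [← hf, ← hg, listDet_map]
  refine listDet_congr fun x _ y _ => ?_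
  rcases x with b | b | r <;> rcases y with c | j <;> simp [f, g, dE]

theorem delta_seg {ι : Type*} (hbar : ℂ) (Qb Qf : ι → ℂ → ℂ) (Qbf : ι → ι → ℂ → ℂ)
    (B1 B2 F : List ι) (k l η ξ : ℤ) (a b c d a' b' c' d' : ℤ) (u : ℂ)
    (ha : a' = a + k) (hb : b' = b + k) (hc : c' = c + l) (hd : d' = d + l) :
    DeltaCF hbar Qb Qf Qbf B1 B2 F (seg a' b') [] (seg c' d') [] η ξ u =
      listDet (rowsL B1 B2 (seg a b)) (colsL F (seg c d)) (dE hbar Qb Qf Qbf k l η ξ u) := by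
  rw [ha, hb, hc, hd, ← seg_map, ← seg_map, delta_shift]

theorem rowsL_snoc {ι : Type*} (B1 B2 : List ι) (R : List ℤ) (r : ℤ) :
    rowsL B1 B2 (R ++ [r]) = rowsL B1 B2 R ++ Sum.inr (Sum.inr r) :: [] := by simp [rowsL]

theorem colsL_snoc {ι : Type*} (F : List ι) (R : List ℤ) (r : ℤ) :
    colsL F (R ++ [r]) = colsL F R ++ Sum.inr r :: [] := by simp [colsL]

theorem listDet_rows_cons {ι β : Type*} (B1 B2 : List ι) (R : List ℤ) (r : ℤ) (Y : List β)
    (e : _ → β → ℂ) :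
    listDet (rowsL B1 B2 (r :: R)) Y e = (-1) ^ (B1.length + B2.length) *
      listDet (Sum.inr (Sum.inr r) :: rowsL B1 B2 R) Y e := by
  rw [rowsL, List.map_cons, listDet_move]
  simp [rowsL]

theorem listDet_cols_cons {ι α : Type*} (F : List ι) (T : List ℤ) (j : ℤ) (X : List α)
    (e : α → _ → ℂ) :
    listDet X (colsL F (j :: T)) e = (-1) ^ F.length *
      listDet X (Sum.inr j :: colsL F T) e := by
  rw [colsL, List.map_cons, listDet_move_col]
  simp [colsL]

theorem listDet_rows_snoc {ι β : Type*} (B1 B2 : List ι) (R : List ℤ) (r : ℤ) (Y : List β)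
    (e : _ → β → ℂ) :
    listDet (rowsL B1 B2 (R ++ [r])) Y e = (-1) ^ (rowsL B1 B2 R).length *
      listDet (Sum.inr (Sum.inr r) :: rowsL B1 B2 R) Y e := by
  rw [rowsL_snoc, listDet_move, List.append_nil]

theorem listDet_cols_snoc {ι α : Type*} (F : List ι) (T : List ℤ) (j : ℤ) (X : List α)
    (e : α → _ → ℂ) :
    listDet X (colsL F (T ++ [j])) e = (-1) ^ (colsL F T).length *
      listDet X (Sum.inr j :: colsL F T) e := by
  rw [colsL_snoc, listDet_move_col, List.append_nil]

theorem mem_rowsL {ι : Type*} {B1 B2 : List ι} {R : List ℤ} {x : ι ⊕ (ι ⊕ ℤ)} :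
    x ∈ rowsL B1 B2 R ↔ (∃ b ∈ B1, x = Sum.inl b) ∨ (∃ b ∈ B2, x = Sum.inr (Sum.inl b)) ∨
      (∃ r ∈ R, x = Sum.inr (Sum.inr r)) := by
  simp [rowsL, or_assoc, eq_comm]

theorem mem_colsL {ι : Type*} {F : List ι} {T : List ℤ} {x : ι ⊕ ℤ} :
    x ∈ colsL F T ↔ (∃ f ∈ F, x = Sum.inl f) ∨ (∃ j ∈ T, x = Sum.inr j) := by
  simp [colsL, eq_comm]

/-- entries for `[0;0]` determinants -/
theorem entry_A {ι : Type*} (hbar : ℂ) (Qb Qf : ι → ℂ → ℂ) (Qbf : ι → ι → ℂ → ℂ) (u : ℂ)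
    {B1 B2 F : List ι} {a b c d : ℤ} (ha : 1 ≤ a) :
    listDet (rowsL B1 B2 (seg a b)) (colsL F (seg c d)) (dE hbar Qb Qf Qbf 0 0 0 0 u) =
    ((rowsL B1 B2 (seg a b)).map (rs 1 0)).prod *
      listDet (rowsL B1 B2 (seg a b)) (colsL F (seg c d)) (baseE hbar Qb Qf Qbf u) := by
  rw [← listDet_scale]
  refine listDet_congr fun x hx y hy => ?_
  rw [mem_rowsL] at hx
  rw [mem_colsL] at hy
  rcases hx with ⟨b, hb, rfl⟩ | ⟨b, hb, rfl⟩ | ⟨r, hr, rfl⟩ <;>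
    rcases hy with ⟨f, hf, rfl⟩ | ⟨j, hj, rfl⟩ <;> simp [dE, baseE, rs]
  · left; congr 1; ring
  · rw [mem_seg] at hr; omega

/-- entries for the `[0;2]` determinant -/
theorem entry_A2 {ι : Type*} (hbar : ℂ) (Qb Qf : ι → ℂ → ℂ) (Qbf : ι → ι → ℂ → ℂ) (u : ℂ)
    {B1 B2 F : List ι} {b c d : ℤ} (hc : 2 ≤ c) (X : List (ι ⊕ (ι ⊕ ℤ)))
    (hX : X = rowsL B1 B2 (seg 1 b))
    (hQQ : ∀ b ∈ B1 ++ B2, ∀ f ∈ F, ∀ u : ℂ,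
      Qb b u * Qf f u = Qbf b f (u + hbar) - Qbf b f (u - hbar)) :
    listDet (Sum.inr (Sum.inr 0) :: X) (colsL F (seg c d)) (dE hbar Qb Qf Qbf 1 (-1) 0 2 u) =
    (X.map (rs 1 1)).prod *
      listDet (Sum.inr (Sum.inr 0) :: X) (colsL F (seg c d)) (baseE hbar Qb Qf Qbf u) := by
  rw [← listDet_rowop (Sum.inr (Sum.inr 0)) X (colsL F (seg c d)) (rt hbar Qb u)
    (baseE hbar Qb Qf Qbf u) (fun x y => baseE hbar Qb Qf Qbf u x y +
      rt hbar Qb u x * baseE hbar Qb Qf Qbf u (Sum.inr (Sum.inr 0)) y)]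
  · have : (X.map (rs 1 1)).prod = (((Sum.inr (Sum.inr 0)) :: X).map (rs 1 1)).prod := by
      simp [rs]
    rw [this, ← listDet_scale]
    refine listDet_congr fun x hx y hy => ?_
    rw [List.mem_cons, hX, mem_rowsL] at hx
    rw [mem_colsL] at hy
    have hx' : (∃ b ∈ B1, x = Sum.inl b) ∨ (∃ b ∈ B2, x = Sum.inr (Sum.inl b)) ∨
      (∃ r : ℤ, x = Sum.inr (Sum.inr r)) := by
      rcases hx with h | h | h | ⟨r, -, h⟩
      · exact Or.inr (Or.inr ⟨0, h⟩)
      · exact Or.inl h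
      · exact Or.inr (Or.inl h)
      · exact Or.inr (Or.inr ⟨r, h⟩)
    rcases hx' with ⟨b, hb, rfl⟩ | ⟨b, hb, rfl⟩ | ⟨r, rfl⟩ <;>
      rcases hy with ⟨f, hf, rfl⟩ | ⟨j, hj, rfl⟩ <;> simp [dE, baseE, rs, rt]
    · rw [hQQ b (by simp [hb]) f hf]; ring_nf
    · rw [mem_seg] at hj
      rw [if_neg (by omega)]; ring_nf
    · rw [hQQ b (by simp [hb]) f hf]; ring_nf
    · rw [mem_seg] at hj
      omega
    · left; congr 1; ring
    · rw [mem_seg] at hj; omega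
  · intro y _; simp [rt]
  · intros; rfl

/-- entries for the `[1;2]` determinants -/
theorem entry_C {ι : Type*} (hbar : ℂ) (Qb Qf : ι → ℂ → ℂ) (Qbf : ι → ι → ℂ → ℂ) (u : ℂ)
    {B1 B2 F : List ι} {a b c d : ℤ} (ha : 1 ≤ a) (hc : 2 ≤ c)
    (hQQ : ∀ b ∈ B1 ++ B2, ∀ f ∈ F, ∀ u : ℂ,
      Qb b u * Qf f u = Qbf b f (u + hbar) - Qbf b f (u - hbar)) :
    listDet (rowsL B1 B2 (seg a b)) (colsL F (seg c d)) (dE hbar Qb Qf Qbf 1 (-1) 1 2 u) =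
    ((rowsL B1 B2 (seg a b)).map (rs (-1) 1)).prod *
      listDet (rowsL B1 B2 (seg a b)) (colsL F (seg c d)) (fun x y => baseE hbar Qb Qf Qbf u x y +
        baseE hbar Qb Qf Qbf u x (Sum.inr 1) *
          baseE hbar Qb Qf Qbf u (Sum.inr (Sum.inr 0)) y) := by
  rw [← listDet_scale]
  refine listDet_congr fun x hx y hy => ?_
  rw [mem_rowsL] at hx
  rw [mem_colsL] at hy
  rcases hx with ⟨b, hb, rfl⟩ | ⟨b, hb, rfl⟩ | ⟨r, hr, rfl⟩ <;>
    rcases hy with ⟨f, hf, rfl⟩ | ⟨j, hj, rfl⟩ <;> simp [dE, baseE, rs]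
  · have := hQQ b (by simp [hb]) f hf (u + hbar)
    norm_num
    rw [this]; ring_nf
  · rw [mem_seg] at hj
    rw [if_neg (by omega)]; ring_nf
  · rw [mem_seg] at hr
    rw [if_neg (by omega), add_zero]; left; congr 1; ring
  · rw [mem_seg] at hr
    rw [mem_seg] at hj
    have h1 : r ≠ 0 := by omega
    have h2 : j ≠ 1 := by omega
    simp [h1, h2]

theorem rs_prod {ι : Type*} (B1 B2 : List ι) (R : List ℤ) :
    ((rowsL B1 B2 R).map (rs (-1) 1)).prod =
      (-1) ^ B2.length * ((rowsL B1 B2 R).map (rs 1 1)).prod := by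
  simp [rowsL, rs, Function.comp_def]

theorem length_rowsL {ι : Type*} (B1 B2 : List ι) (R : List ℤ) :
    (rowsL B1 B2 R).length = B1.length + B2.length + R.length := by
  simp [rowsL, add_assoc]

theorem length_colsL {ι : Type*} (F : List ι) (T : List ℤ) :
    (colsL F T).length = F.length + T.length := by simp [colsL]

theorem neg_one_zpow_aux (a b c : ℕ) : (-1 : ℂ) ^ (((a : ℤ) - b) + (c : ℤ) + 1) =
    (-1) ^ (a + (b + c) + 1) := by
  rw [← zpow_natCast, show ((a : ℤ) - b) + (c : ℤ) + 1 = ((a + (b + c) + 1 : ℕ) : ℤ) - 2 * b by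
    push_cast; ring, zpow_sub₀ (by norm_num), zpow_mul]
  simp

theorem neg_one_sq_pow (n : ℕ) : ((-1 : ℂ) ^ n) * (-1) ^ n = 1 := by
  rw [← mul_pow]; simp

theorem main_pq {ι : Type*} (hbar : ℂ) 
    (Qb Qf : ι → ℂ → ℂ) (Qbf : ι → ι → ℂ → ℂ)
    (B1 B2 F : List ι)
    (hQQ : ∀ b ∈ B1 ++ B2, ∀ f ∈ F, ∀ u : ℂ,
      Qb b u * Qf f u = Qbf b f (u + hbar) - Qbf b f (u - hbar))
    (p q : ℤ) (hp : 1 ≤ p) (hq : 1 ≤ q)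
    (hpq : (B1.length : ℤ) + B2.length + p = F.length + q) (u : ℂ) :
      DeltaCF hbar Qb Qf Qbf B1 B2 F (seg 1 p) [] (seg 1 q) [] 0 0 u *
        DeltaCF hbar Qb Qf Qbf B1 B2 F (seg 1 p) [] (seg 1 q) [] 0 2 u =
      (-1 : ℂ) ^ (B1.length + F.length + 1) *
        (DeltaCF hbar Qb Qf Qbf B1 B2 F (seg 2 p) [] (seg 1 (q - 1)) [] 1 2 u *
          DeltaCF hbar Qb Qf Qbf B1 B2 F (seg 1 p) [] (seg 2 (q + 1)) [] 0 0 u +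
         DeltaCF hbar Qb Qf Qbf B1 B2 F (seg 2 (p + 1)) [] (seg 1 q) [] 1 2 u *
          DeltaCF hbar Qb Qf Qbf B1 B2 F (seg 1 (p - 1)) [] (seg 2 q) [] 0 0 u) := by
  have hlen : (rowsL B1 B2 (seg 1 (p - 1))).length = (colsL F (seg 2 q)).length := by
    rw [length_rowsL, length_colsL, length_seg, length_seg]; omega
  have hp1 : seg 1 p = seg 1 (p - 1) ++ [p] := seg_snoc hp
  have hq1 : seg 1 q = 1 :: seg 2 q := seg_cons hq
  have hp0 : seg 0 (p - 1) = 0 :: seg 1 (p - 1) := seg_cons (by omega)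
  have hq2 : seg 2 (q + 1) = seg 2 q ++ [q + 1] := by
    rw [seg_snoc (by omega)]; simp
  rw [delta_seg hbar Qb Qf Qbf B1 B2 F 0 0 0 0 1 p 1 q 1 p 1 q u (by simp) (by simp) (by simp) (by simp),
    delta_seg hbar Qb Qf Qbf B1 B2 F 1 (-1) 0 2 0 (p - 1) 2 (q + 1) 1 p 1 q u (by simp) (by simp) (by simp) (by simp),
    delta_seg hbar Qb Qf Qbf B1 B2 F 1 (-1) 1 2 1 (p - 1) 2 q 2 p 1 (q - 1) u (by simp) (by simp) (by simp) (by ring),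
    delta_seg hbar Qb Qf Qbf B1 B2 F 0 0 0 0 1 p 2 (q + 1) 1 p 2 (q + 1) u (by simp) (by simp) (by simp) (by simp),
    delta_seg hbar Qb Qf Qbf B1 B2 F 1 (-1) 1 2 1 p 2 (q + 1) 2 (p + 1) 1 q u (by simp) (by simp) (by simp) (by simp),
    delta_seg hbar Qb Qf Qbf B1 B2 F 0 0 0 0 1 (p - 1) 2 q 1 (p - 1) 2 q u (by simp) (by simp) (by simp) (by simp)]
  rw [entry_A _ _ _ _ _ le_rfl, entry_A _ _ _ _ _ le_rfl, entry_A _ _ _ _ _ le_rfl,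
    entry_C _ _ _ _ _ le_rfl le_rfl hQQ, entry_C _ _ _ _ _ le_rfl le_rfl hQQ, rs_prod, rs_prod]
  rw [hp0, listDet_rows_cons, entry_A2 _ _ _ _ _ le_rfl _ rfl hQQ, hp1, hq1, hq2]
  simp only [listDet_rows_snoc, listDet_cols_cons, listDet_cols_snoc]
  simp only [rowsL_snoc, List.map_append,
    List.map_cons, List.map_nil, List.prod_append, List.prod_cons, List.prod_nil, mul_one, hlen]
  have DJ := listDet_dj (Sum.inr (Sum.inr 0)) (Sum.inr (Sum.inr p)) (rowsL B1 B2 (seg 1 (p - 1)))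
    (Sum.inr 1) (Sum.inr (q + 1)) (colsL F (seg 2 q)) (baseE hbar Qb Qf Qbf u) hlen
  rw [listDet_schur _ (Sum.inr (Sum.inr p) :: rowsL B1 B2 (seg 1 (p - 1))), listDet_schur _ (rowsL B1 B2 (seg 1 (p - 1))) (Sum.inr 1)] at DJ
  rotate_left
  · rw [mem_rowsL]; simp [mem_seg]
  · simp [baseE]
  · rw [List.mem_cons, mem_rowsL]; simp [mem_seg]; omega
  · simp [baseE]
  have hs1 : rs (ι := ι) 1 0 (Sum.inr (Sum.inr p)) = (-1) ^ (p - 1) := by simp [rs]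
  have hs2 : rs (ι := ι) 1 1 (Sum.inr (Sum.inr p)) = - (-1) ^ (p - 1) := by
    simp [rs, zpow_sub₀, div_neg]
  rw [hs1, hs2]
  generalize listDet (Sum.inr (Sum.inr 0) :: rowsL B1 B2 (seg 1 (p - 1)))
    (Sum.inr (q + 1) :: colsL F (seg 2 q)) (baseE hbar Qb Qf Qbf u) = ad at *
  generalize listDet (Sum.inr (Sum.inr p) :: rowsL B1 B2 (seg 1 (p - 1)))
    (Sum.inr 1 :: colsL F (seg 2 q)) (baseE hbar Qb Qf Qbf u) = bc at *
  generalize listDet (Sum.inr (Sum.inr p) :: rowsL B1 B2 (seg 1 (p - 1)))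
    (Sum.inr (q + 1) :: colsL F (seg 2 q)) (baseE hbar Qb Qf Qbf u) = bd at *
  generalize listDet (rowsL B1 B2 (seg 1 (p - 1)))
    (colsL F (seg 2 q)) (baseE hbar Qb Qf Qbf u) = core at *
  generalize listDet (rowsL B1 B2 (seg 1 (p - 1))) (colsL F (seg 2 q)) _ = ac at *
  generalize listDet (Sum.inr (Sum.inr p) :: rowsL B1 B2 (seg 1 (p - 1)))
    (Sum.inr (q + 1) :: colsL F (seg 2 q)) _ = abcd at *
  have hl := neg_one_sq_pow (colsL F (seg 2 q)).length
  generalize (-1 : ℂ) ^ (colsL F (seg 2 q)).length = ε at *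
  have hB2 := neg_one_sq_pow B2.length
  simp only [pow_add, pow_one]
  generalize (-1 : ℂ) ^ B2.length = ε2 at *
  generalize (-1 : ℂ) ^ B1.length = ε1 at *
  generalize (-1 : ℂ) ^ F.length = εF at *
  generalize (-1 : ℂ) ^ (p - 1) = β at *
  generalize (List.map (rs 1 0) (rowsL B1 B2 (seg 1 (p - 1)))).prod = π1 at *
  generalize (List.map (rs 1 1) (rowsL B1 B2 (seg 1 (p - 1)))).prod = π2 at *
  linear_combination (ε1 * ε2 * εF * π1 * π2 * β) * (ε * ε * DJ) 

/-- **Bilinear determinant identity on the line `a = s + η1` (case (i) of the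
Hirota proof).** -/
theorem bilinear_case_i {ι : Type*} (hbar : ℂ) (hbar_ne : hbar ≠ 0)
    (Qb Qf : ι → ℂ → ℂ) (Qbf : ι → ι → ℂ → ℂ)
    (B1 B2 F1 F2 : List ι) (hnd : (B1 ++ B2 ++ F1 ++ F2).Nodup)
    (hQQ : ∀ b ∈ B1 ++ B2, ∀ f ∈ F1 ++ F2, ∀ u : ℂ,
      Qb b u * Qf f u = Qbf b f (u + hbar) - Qbf b f (u - hbar))
    (hm1 : 1 ≤ B1.length) (hn : 1 ≤ F1.length + F2.length)
    (s : ℤ)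
    (hs1 : -((B1.length : ℤ) - F1.length) + 1 ≤ s)
    (hs2 : ((B2.length : ℤ) - F2.length) + 1 ≤ s)
    (hs3 : s ≤ (F1.length : ℤ)) :
    ∀ u : ℂ,
      DeltaCF hbar Qb Qf Qbf B1 B2 (F1 ++ F2)
          (seg 1 (s - ((B2.length : ℤ) - F2.length))) []
          (seg 1 (s + ((B1.length : ℤ) - F1.length))) [] 0 0 u *
        DeltaCF hbar Qb Qf Qbf B1 B2 (F1 ++ F2)
          (seg 1 (s - ((B2.length : ℤ) - F2.length))) []
          (seg 1 (s + ((B1.length : ℤ) - F1.length))) [] 0 2 u =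
      (-1 : ℂ) ^ (((B1.length : ℤ) - F1.length) + (F2.length : ℤ) + 1) *
        (DeltaCF hbar Qb Qf Qbf B1 B2 (F1 ++ F2)
            (seg 2 (s - ((B2.length : ℤ) - F2.length))) []
            (seg 1 (s + ((B1.length : ℤ) - F1.length) - 1)) [] 1 2 u *
          DeltaCF hbar Qb Qf Qbf B1 B2 (F1 ++ F2)
            (seg 1 (s - ((B2.length : ℤ) - F2.length))) []
            (seg 2 (s + ((B1.length : ℤ) - F1.length) + 1)) [] 0 0 u +
         DeltaCF hbar Qb Qf Qbf B1 B2 (F1 ++ F2)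
            (seg 2 (s - ((B2.length : ℤ) - F2.length) + 1)) []
            (seg 1 (s + ((B1.length : ℤ) - F1.length))) [] 1 2 u *
          DeltaCF hbar Qb Qf Qbf B1 B2 (F1 ++ F2)
            (seg 1 (s - ((B2.length : ℤ) - F2.length) - 1)) []
            (seg 2 (s + ((B1.length : ℤ) - F1.length))) [] 0 0 u) := by

  intro u
  have H := main_pq hbar Qb Qf Qbf B1 B2 (F1 ++ F2) hQQ (s - ((B2.length : ℤ) - F2.length))
    (s + ((B1.length : ℤ) - F1.length)) (by omega) (by omega)
    (by rw [List.length_append]; push_cast; ring) u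
  rw [H, neg_one_zpow_aux, List.length_append]

end Stmt12
end

section
/- Bilinear determinant identity on the line a = −s+η2 (case (v) of the Hirota proof). Assume m2 ≥ 1 and n ≥ 1, and let s be an integer with −n2 ≤ s ≤ min{−η1, η2}−1. Then, pointwise on ℂ, Δ^{⟨s+η1+2,1⟩,[1;2]}_{∅,∅,⟨s−η2,−1⟩} · Δ^{⟨s+η1+1,0⟩,[0;2]}_{∅,∅,⟨s−η2+1,0⟩} = −Δ^{⟨s+η1+1,0⟩,[0;2]}_{∅,∅,⟨s−η2,−1⟩} · Δ^{⟨s+η1+2,0⟩,[1;2]}_{∅,∅,⟨s−η2+1,−1⟩} − Δ^{⟨s+η1+2,0⟩,[0;2]}_{∅,∅,⟨s−η2+1,−1⟩} · Δ^{⟨s+η1+1,0⟩,[1;2]}_{∅,∅,⟨s−η2,−1⟩}. -/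
open scoped BigOperators

namespace Stmt13

/-- The integer segment tuple `⟨a,b⟩ = (a, a+1, …, b)`, empty when `b < a`. -/
def seg (a b : ℤ) : List ℤ := (List.range (b - a + 1).toNat).map (fun k => a + (k : ℤ))

/-- Product of `g x y` over ordered pairs `x ≺ y` in the list `L`. -/
def pairProd {ι : Type*} (L : List ι) (g : ι → ι → ℂ) : ℂ :=
  ∏ i : Fin L.length, ∏ j : Fin L.length, if i < j then g (L.get i) (L.get j) else 1

/-- Product of `g x` over a list. -/
def prodL {ι : Type*} (L : List ι) (g : ι → ℂ) : ℂ := (L.map g).prod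

/-- Product of `g x y` over pairs `(x, y) ∈ L × M`. -/
def prodLL {ι : Type*} (L M : List ι) (g : ι → ι → ℂ) : ℂ :=
  (L.map (fun x => (M.map (g x)).prod)).prod

/-- Determinant of the square matrix whose rows and columns are labelled by the given
key lists (by convention `0` if the two lists have different lengths). -/
noncomputable def listDet {α β : Type*} (rows : List α) (cols : List β) (e : α → β → ℂ) : ℂ :=
  if h : rows.length = cols.length then
    Matrix.det (Matrix.of fun i j : Fin rows.length =>
      e (rows.get i) (cols.get (Fin.cast h j)))
  else 0

/-- The coefficient-free sparse determinant `Δ^{R,[η;ξ]}_{S,T1,T2}` built from the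
coefficient-free Baxter Q-functions, as a function of the spectral parameter `u`. -/
noncomputable def DeltaCF {ι : Type*} (hbar : ℂ) (Qb Qf : ι → ℂ → ℂ) (Qbf : ι → ι → ℂ → ℂ)
    (B1 B2 F : List ι) (R S T1 T2 : List ℤ) (η ξ : ℤ) (u : ℂ) : ℂ :=
  listDet
    ((B1.map (Sum.inl : ι → ι ⊕ (ι ⊕ ℤ)) ++
      B2.map (fun b => (Sum.inr (Sum.inl b) : ι ⊕ (ι ⊕ ℤ))) ++
      R.map (fun r => (Sum.inr (Sum.inr r) : ι ⊕ (ι ⊕ ℤ)))))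
    ((F.map (Sum.inl : ι → ι ⊕ (ℤ ⊕ (ℤ ⊕ ℤ))) ++
      S.map (fun j => (Sum.inr (Sum.inl j) : ι ⊕ (ℤ ⊕ (ℤ ⊕ ℤ)))) ++
      T1.map (fun j => (Sum.inr (Sum.inr (Sum.inl j)) : ι ⊕ (ℤ ⊕ (ℤ ⊕ ℤ)))) ++
      T2.map (fun j => (Sum.inr (Sum.inr (Sum.inr j)) : ι ⊕ (ℤ ⊕ (ℤ ⊕ ℤ))))))
    (fun row col =>
      match row, col with
      | Sum.inl b, Sum.inl f => Qbf b f (u + (ξ : ℂ) * hbar)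
      | Sum.inl b, Sum.inr (Sum.inl j) => Qb b (u + ((ξ + 2 * j - 1 : ℤ) : ℂ) * hbar)
      | Sum.inl b, Sum.inr (Sum.inr (Sum.inl j)) =>
          Qb b (u + ((ξ + 2 * j - 1 : ℤ) : ℂ) * hbar)
      | Sum.inl _, Sum.inr (Sum.inr (Sum.inr _)) => 0
      | Sum.inr (Sum.inl b), Sum.inl f =>
          (-1 : ℂ) ^ η * Qbf b f (u + ((ξ - 2 * η : ℤ) : ℂ) * hbar)
      | Sum.inr (Sum.inl b), Sum.inr (Sum.inl j) =>
          Qb b (u + ((ξ + 2 * j - 1 : ℤ) : ℂ) * hbar)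
      | Sum.inr (Sum.inl _), Sum.inr (Sum.inr (Sum.inl _)) => 0
      | Sum.inr (Sum.inl b), Sum.inr (Sum.inr (Sum.inr j)) =>
          Qb b (u + ((ξ + 2 * j - 1 : ℤ) : ℂ) * hbar)
      | Sum.inr (Sum.inr r), Sum.inl f =>
          (-1 : ℂ) ^ (r - 1) * Qf f (u + ((ξ - 2 * r + 1 : ℤ) : ℂ) * hbar)
      | Sum.inr (Sum.inr _), Sum.inr _ => 0)

/-- The bordered determinant of `A` with last column `c`, last row `a`, and corner `0`. -/
noncomputable def bord {k : ℕ} (A : Matrix (Fin k) (Fin k) ℂ) (c a : Fin k → ℂ) : ℂ :=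
  (Matrix.fromBlocks A (Matrix.of fun i (_ : Unit) => c i) (Matrix.of fun (_ : Unit) j => a j)
    (0 : Matrix Unit Unit ℂ)).det

theorem bord_inv {k : ℕ} (A : Matrix (Fin k) (Fin k) ℂ) (c a : Fin k → ℂ) (h : A.det ≠ 0) :
    bord A c a = - (A.det * (Matrix.of (fun (_ : Unit) j => a j) * A⁻¹ *
      Matrix.of (fun i (_ : Unit) => c i)) () ()) := by
  have hi : Invertible A := Matrix.invertibleOfIsUnitDet A (isUnit_iff_ne_zero.mpr h)
  unfold bord
  rw [Matrix.det_fromBlocks₁₁, Matrix.invOf_eq_nonsing_inv, Matrix.det_unique (n := Unit)]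
  simp

theorem bord_col {k : ℕ} (A : Matrix (Fin k) (Fin k) ℂ) (d b a : Fin k → ℂ) :
    bord (A + Matrix.of fun i j => d i * b j) d a = bord A d a := by
  have h : (Matrix.fromBlocks (A + Matrix.of fun i j => d i * b j)
      (Matrix.of fun i (_ : Unit) => d i) (Matrix.of fun (_ : Unit) j => a j)
      (0 : Matrix Unit Unit ℂ)) =
      (Matrix.fromBlocks A
      (Matrix.of fun i (_ : Unit) => d i) (Matrix.of fun (_ : Unit) j => a j)
      (0 : Matrix Unit Unit ℂ)) * Matrix.fromBlocks 1 0 (Matrix.of fun (_ : Unit) j => b j) 1 := by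
    rw [Matrix.fromBlocks_multiply]
    congr 1
    · ext i j; simp [Matrix.mul_apply]
    · simp
    · simp
    · simp
  unfold bord
  rw [h, Matrix.det_mul, Matrix.det_fromBlocks_zero₁₂]
  simp

theorem bord_key_inv {k : ℕ} (A : Matrix (Fin k) (Fin k) ℂ) (a b c d : Fin k → ℂ)
    (h : A.det ≠ 0) :
    bord A c b * bord A d a = A.det * bord (A + Matrix.of fun i j => d i * b j) c a -
      bord A c a * (A + Matrix.of fun i j => d i * b j).det := by
  have hu : IsUnit A.det := isUnit_iff_ne_zero.mpr h
  have hi : Invertible A := Matrix.invertibleOfIsUnitDet A hu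
  -- `det (A + d b)` expressed through the bordered determinant
  have e1 : (A + Matrix.of fun i j => d i * b j).det = A.det - bord A d b := by
    have h1 : (A + Matrix.of fun i j => d i * b j) =
        A + (Matrix.of fun i (_ : Unit) => d i) * (Matrix.of fun (_ : Unit) j => b j) := by
      ext i j; simp [Matrix.mul_apply]
    rw [h1, Matrix.det_add_mul _ _ hu, bord_inv A d b h, Matrix.det_unique (n := Unit)]
    simp [Matrix.add_apply]
    ring
  -- Schur complement with respect to `A` of the bordered matrix
  have e2 : bord (A + Matrix.of fun i j => d i * b j) c a * A.det =
      bord A c a * (A.det - bord A d b) + bord A c b * bord A d a := by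
    let U : Matrix (Fin k ⊕ Unit) (Fin 3) ℂ := Matrix.of fun i j =>
      Sum.elim (fun i => ![d i, c i, 0] j) (fun _ => ![0, 0, 1] j) i
    let V : Matrix (Fin 3) (Fin k ⊕ Unit) ℂ := Matrix.of fun i j =>
      Sum.elim (fun j => ![b j, 0, a j] i) (fun _ => ![0, 1, -1] i) j
    have hK : Matrix.fromBlocks (A + Matrix.of fun i j => d i * b j)
        (Matrix.of fun i (_ : Unit) => c i) (Matrix.of fun (_ : Unit) j => a j)
        (0 : Matrix Unit Unit ℂ) = Matrix.fromBlocks A 0 0 1 + U * V := by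
      ext i j
      rcases i with i | i <;> rcases j with j | j <;>
        simp [U, V, Matrix.mul_apply, Fin.sum_univ_three]
    have hBd : (Matrix.fromBlocks A 0 0 (1 : Matrix Unit Unit ℂ)).det = A.det := by
      rw [Matrix.det_fromBlocks_zero₁₂]; simp
    have hBi : (Matrix.fromBlocks A 0 0 (1 : Matrix Unit Unit ℂ))⁻¹ =
        Matrix.fromBlocks A⁻¹ 0 0 1 := by
      apply Matrix.inv_eq_right_inv
      rw [Matrix.fromBlocks_multiply]
      simp [Matrix.mul_nonsing_inv _ hu, Matrix.fromBlocks_one]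
    have hK2 : bord (A + Matrix.of fun i j => d i * b j) c a =
        A.det * (1 + V * (Matrix.fromBlocks A⁻¹ 0 0 1 :
          Matrix (Fin k ⊕ Unit) (Fin k ⊕ Unit) ℂ) * U).det := by
      unfold bord
      rw [hK, Matrix.det_add_mul _ _ (by rw [hBd]; exact hu), hBd, hBi]
    rw [hK2, bord_inv A c a h, bord_inv A c b h, bord_inv A d a h, bord_inv A d b h,
      Matrix.det_fin_three]
    simp [U, V, Matrix.mul_apply, Fintype.sum_sum_type, Matrix.one_apply]
    ring
  rw [e1]; linear_combination -e2

theorem finite_det_zero {k : ℕ} (A : Matrix (Fin k) (Fin k) ℂ) :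
    {t : ℂ | (A + t • (1 : Matrix (Fin k) (Fin k) ℂ)).det = 0}.Finite := by
  have h : {t : ℂ | (A + t • (1 : Matrix (Fin k) (Fin k) ℂ)).det = 0} ⊆
      {t | (-A).charpoly.IsRoot t} := by
    intro t ht
    simp only [Set.mem_ofPred_eq, Polynomial.IsRoot, Matrix.eval_charpoly] at ht ⊢
    rw [← ht]; congr 1
    ext i j; simp [Matrix.scalar_apply, Matrix.one_apply, Matrix.diagonal_apply, add_comm]
  exact Set.Finite.subset
    (Polynomial.finite_setOfPred_isRoot (Matrix.charpoly_monic (-A)).ne_zero) h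

theorem continuous_bord {k : ℕ} (f : ℂ → Matrix (Fin k) (Fin k) ℂ) (x y : Fin k → ℂ)
    (hf : Continuous f) : Continuous fun t => bord (f t) x y := by
  unfold bord
  apply Continuous.matrix_det
  exact Continuous.matrix_fromBlocks hf continuous_const continuous_const continuous_const

theorem bord_key {k : ℕ} (A : Matrix (Fin k) (Fin k) ℂ) (a b c d : Fin k → ℂ) :
    bord A c b * bord A d a = A.det * bord (A + Matrix.of fun i j => d i * b j) c a -
      bord A c a * (A + Matrix.of fun i j => d i * b j).det := by
  obtain ⟨g, hg⟩ : ∃ g : ℂ → Matrix (Fin k) (Fin k) ℂ, g = fun t => A + t • 1 := ⟨_, rfl⟩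
  obtain ⟨E, hE⟩ : ∃ E : Matrix (Fin k) (Fin k) ℂ, E = Matrix.of fun i j => d i * b j := ⟨_, rfl⟩
  have hfin : {t : ℂ | (g t).det = 0}.Finite := by rw [hg]; exact finite_det_zero A
  have hd : Dense ({t : ℂ | (g t).det = 0}ᶜ) := Set.Countable.dense_compl ℂ hfin.countable
  have hc : Continuous g := by rw [hg]; fun_prop
  have hc2 : Continuous fun t => g t + E := hc.add continuous_const
  have h1 : Continuous fun t => bord (g t) c b * bord (g t) d a :=
    (continuous_bord g c b hc).mul (continuous_bord g d a hc)
  have h2 : Continuous fun t => (g t).det * bord (g t + E) c a -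
      bord (g t) c a * (g t + E).det :=
    (hc.matrix_det.mul (continuous_bord _ c a hc2)).sub
      ((continuous_bord g c a hc).mul hc2.matrix_det)
  have h3 : Set.EqOn (fun t => bord (g t) c b * bord (g t) d a)
      (fun t => (g t).det * bord (g t + E) c a - bord (g t) c a * (g t + E).det)
      ({t : ℂ | (g t).det = 0}ᶜ) := by
    intro t ht
    have := bord_key_inv (g t) a b c d ht
    rw [← hE] at this
    exact this
  have h4 := congrFun (Continuous.ext_on hd h1 h2 h3) 0
  have h5 : g 0 = A := by rw [hg]; simp
  rw [h5] at h4
  rw [← hE]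
  exact h4

theorem listDet_eq {α β : Type*} {k : ℕ} (C : List α) (D : List β) (e : α → β → ℂ)
    (hC : C.length = k) (hD : D.length = k) :
    listDet C D e = Matrix.det (Matrix.of fun i j : Fin k =>
      e (C.get (Fin.cast hC.symm i)) (D.get (Fin.cast hD.symm j))) := by
  subst hC
  unfold listDet
  rw [dif_pos hD.symm]
  rfl

theorem listDet_bord {α β : Type*} {k : ℕ} (C : List α) (D : List β) (x : α) (y : β)
    (e : α → β → ℂ) (h0 : e x y = 0)
    (hC : C.length = k) (hD : D.length = k) :
    listDet (C ++ [x]) (D ++ [y]) e = bord (Matrix.of fun i j : Fin k =>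
      e (C.get (Fin.cast hC.symm i)) (D.get (Fin.cast hD.symm j)))
      (fun i => e (C.get (Fin.cast hC.symm i)) y)
      (fun j => e x (D.get (Fin.cast hD.symm j))) := by
  rw [listDet_eq (k := k + 1) _ _ _ (by simp [hC]) (by simp [hD])]
  unfold bord
  rw [← Matrix.det_submatrix_equiv_self
    ((Equiv.sumCongr (Equiv.refl (Fin k)) (Equiv.ofUnique Unit (Fin 1))).trans finSumFinEquiv)]
  congr 1
  ext i j
  rcases i with i | i <;> rcases j with j | j <;>
    simp [List.getElem_append, hC, hD, h0]

theorem listDet_congr {α β : Type*} (C : List α) (D : List β) (e e' : α → β → ℂ)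
    (h : ∀ r ∈ C, ∀ c ∈ D, e r c = e' r c) : listDet C D e = listDet C D e' := by
  unfold listDet
  split_ifs with hl
  · congr 1
    ext i j
    exact h _ (List.get_mem _ _) _ (List.get_mem _ _)
  · rfl

theorem listDet_swap {α β : Type*} (D : List β) (e : α → β → ℂ) (x y : α) (P Q : List α) :
    listDet (P ++ x :: y :: Q) D e = - listDet (P ++ y :: x :: Q) D e := by
  by_cases hl : (P ++ x :: y :: Q).length = D.length
  swap
  · have hl' : ¬ (P ++ y :: x :: Q).length = D.length := by simpa using hl
    unfold listDet
    rw [dif_neg hl, dif_neg hl']; simp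
  obtain ⟨k, hk⟩ : ∃ k, D.length = k := ⟨_, rfl⟩
  have hk1 : (P ++ x :: y :: Q).length = k := hl.trans hk
  have hk2 : (P ++ y :: x :: Q).length = k := by simpa using hk1
  have hp : P.length + 1 < k := by rw [← hk1]; simp
  rw [listDet_eq _ _ _ hk1 hk, listDet_eq _ _ _ hk2 hk]
  let σ : Equiv.Perm (Fin k) := Equiv.swap ⟨P.length, by omega⟩ ⟨P.length + 1, hp⟩
  have hs : Equiv.Perm.sign σ = -1 := Equiv.Perm.sign_swap (by simp)
  have := Matrix.det_permute σ (Matrix.of fun i j : Fin k =>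
      e ((P ++ y :: x :: Q).get (Fin.cast hk2.symm i)) (D.get (Fin.cast hk.symm j)))
  rw [hs] at this
  have h2 : ∀ M : ℂ, ((-1 : ℤˣ) : ℂ) * M = - M := by intro M; simp
  rw [h2] at this
  rw [← this]
  congr 1
  ext i j
  simp only [Matrix.of_apply, Matrix.submatrix_apply, id]
  congr 1
  simp only [List.get_eq_getElem, Fin.val_cast, σ, Equiv.swap_apply_def]
  rcases i with ⟨i, hi⟩
  simp only [Fin.mk.injEq]
  split_ifs with h h'
  · subst h; simp
  · subst h'; simp
  · rw [List.getElem_append, List.getElem_append]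
    split_ifs with h3
    · rfl
    · obtain ⟨t, rfl⟩ : ∃ t, i = P.length + 2 + t := ⟨i - P.length - 2, by omega⟩
      have : P.length + 2 + t - P.length = t + 2 := by omega
      simp [this]

theorem listDet_row_last {α β : Type*} (D : List β) (e : α → β → ℂ) (x : α) (P Q : List α) :
    listDet (P ++ x :: Q) D e = (-1) ^ Q.length * listDet (P ++ Q ++ [x]) D e := by
  induction Q generalizing P with
  | nil => simp
  | cons q Q ih =>
    rw [listDet_swap]
    have := ih (P ++ [q])
    simp only [List.append_assoc, List.cons_append, List.nil_append] at this ⊢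
    rw [this, List.length_cons, pow_succ]; ring

theorem listDet_transpose {α β : Type*} (C : List α) (D : List β) (e : α → β → ℂ) :
    listDet C D e = listDet D C (fun y x => e x y) := by
  by_cases hl : C.length = D.length
  · rw [listDet_eq (k := D.length) C D e hl rfl, listDet_eq (k := D.length) D C _ rfl hl,
      ← Matrix.det_transpose]
    rfl
  · unfold listDet
    rw [dif_neg hl, dif_neg (Ne.symm hl)]

theorem listDet_col_last {α β : Type*} (C : List α) (e : α → β → ℂ) (x : β) (P Q : List β) :
    listDet C (P ++ x :: Q) e = (-1) ^ Q.length * listDet C (P ++ Q ++ [x]) e := by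
  rw [listDet_transpose, listDet_row_last, ← listDet_transpose]

theorem listDet_scale {α β : Type*} (C : List α) (D : List β) (e : α → β → ℂ)
    (s : α → ℂ) (t : β → ℂ) :
    listDet C D (fun x y => s x * t y * e x y) =
      (C.map s).prod * (D.map t).prod * listDet C D e := by
  by_cases hl : C.length = D.length
  · rw [listDet_eq (k := D.length) C D e hl rfl, listDet_eq (k := D.length) C D _ hl rfl]
    have h1 : (C.map s).prod = ∏ i : Fin D.length, s (C.get (Fin.cast hl.symm i)) := by
      rw [← List.prod_ofFn]
      congr 1
      apply List.ext_getElem <;> simp [hl]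
    have h2 : (D.map t).prod = ∏ i : Fin D.length, t (D.get i) := by
      rw [← List.prod_ofFn]
      congr 1
      apply List.ext_getElem <;> simp
    rw [h1, h2, mul_assoc, ← Matrix.det_mul_row, ← Matrix.det_mul_column]
    congr 1
    ext i j
    simp; ring
  · unfold listDet
    rw [dif_neg hl, dif_neg hl]; simp

theorem list_key {α β : Type*} (C : List α) (D : List β) (hCD : C.length = D.length)
    (x y : α) (z w : β) (M E : α → β → ℂ)
    (hE : ∀ r ∈ C ++ [x], ∀ c ∈ D ++ [z, w], E r c = M r c + M r w * M y c)
    (hxz : M x z = 0) (hxw : M x w = 0) (hyz : M y z = 0) (hyw : M y w = 0) :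
    listDet (C ++ [y]) (D ++ [z]) M * listDet (C ++ [x]) (D ++ [w]) E =
      listDet C D M * listDet (C ++ [x]) (D ++ [z]) E -
      listDet (C ++ [x]) (D ++ [z]) M * listDet C D E := by
  have hc : ∀ i : Fin D.length, C.get (Fin.cast hCD.symm i) ∈ C ++ [x] := fun i =>
    List.mem_append_left _ (List.get_mem _ _)
  have hd : ∀ i : Fin D.length, D.get i ∈ D ++ [z, w] := fun i =>
    List.mem_append_left _ (List.get_mem _ _)
  have hx : x ∈ C ++ [x] := by simp
  have hz : z ∈ D ++ [z, w] := by simp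
  have hw : w ∈ D ++ [z, w] := by simp
  have hExz : E x z = 0 := by rw [hE x hx z hz, hxz, hyz]; simp
  have hExw : E x w = 0 := by rw [hE x hx w hw, hxw, hyw]; simp
  rw [listDet_bord C D y z M hyz hCD rfl, listDet_bord C D x w E hExw hCD rfl,
    listDet_bord C D x z M hxz hCD rfl, listDet_bord C D x z E hExz hCD rfl,
    listDet_eq C D M hCD rfl, listDet_eq C D E hCD rfl]
  simp only [Fin.cast_eq_self]
  have hA : (Matrix.of fun i j : Fin D.length => E (C.get (Fin.cast hCD.symm i)) (D.get j)) =
      (Matrix.of fun i j : Fin D.length => M (C.get (Fin.cast hCD.symm i)) (D.get j)) +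
      Matrix.of fun i j => M (C.get (Fin.cast hCD.symm i)) w * M y (D.get j) := by
    ext i j
    simp only [Matrix.of_apply, Matrix.add_apply]
    exact hE _ (hc i) _ (hd j)
  have hEz : (fun i : Fin D.length => E (C.get (Fin.cast hCD.symm i)) z) =
      fun i => M (C.get (Fin.cast hCD.symm i)) z := by
    ext i; rw [hE _ (hc i) _ hz, hyz]; simp
  have hEw : (fun i : Fin D.length => E (C.get (Fin.cast hCD.symm i)) w) =
      fun i => M (C.get (Fin.cast hCD.symm i)) w := by
    ext i; rw [hE _ (hc i) _ hw, hyw]; simp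
  have hEx : (fun j : Fin D.length => E x (D.get j)) = fun j => M x (D.get j) := by
    ext j; rw [hE _ hx _ (hd j), hxw]; simp
  rw [hA, hEz, hEw, hEx, bord_col, bord_key]

theorem seg_eq (a b : ℤ) :
    seg a b = (List.range (b - a + 1).toNat).map (fun k : ℕ => a + (k : ℤ)) := by
  unfold seg
  simp only [List.bind_eq_flatMap, List.pure_def, List.map_flatMap, List.map_cons, List.map_nil]
  rw [List.map_eq_flatMap]

theorem seg_cons (a b : ℤ) (h : a ≤ b) : seg a b = a :: seg (a + 1) b := by
  rw [seg_eq, seg_eq]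
  obtain ⟨n, hn⟩ : ∃ n : ℕ, b - a = n := ⟨(b - a).toNat, by omega⟩
  have h1 : (b - a + 1).toNat = n + 1 := by omega
  have h2 : (b - (a + 1) + 1).toNat = n := by omega
  rw [h1, h2, List.range_succ_eq_map]
  simp only [List.map_cons, List.map_map]
  congr 1
  · simp
  · apply List.map_congr_left
    intro x _
    simp; ring

theorem seg_snoc (a b : ℤ) (h : a ≤ b + 1) : seg a (b + 1) = seg a b ++ [b + 1] := by
  rw [seg_eq, seg_eq]
  have h1 : (b + 1 - a + 1).toNat = (b - a + 1).toNat + 1 := by omega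
  rw [h1, List.range_succ, List.map_append]
  congr 1
  simp; omega

theorem seg_length (a b : ℤ) : (seg a b).length = (b - a + 1).toNat := by
  simp [seg_eq]

/-- The entries of the matrix defining `DeltaCF`. -/
noncomputable def ent {ι : Type*} (hbar : ℂ) (Qb Qf : ι → ℂ → ℂ) (Qbf : ι → ι → ℂ → ℂ)
    (η ξ : ℤ) (u : ℂ) (row : ι ⊕ (ι ⊕ ℤ)) (col : ι ⊕ (ℤ ⊕ (ℤ ⊕ ℤ))) : ℂ :=
      match row, col with
      | Sum.inl b, Sum.inl f => Qbf b f (u + (ξ : ℂ) * hbar)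
      | Sum.inl b, Sum.inr (Sum.inl j) => Qb b (u + ((ξ + 2 * j - 1 : ℤ) : ℂ) * hbar)
      | Sum.inl b, Sum.inr (Sum.inr (Sum.inl j)) =>
          Qb b (u + ((ξ + 2 * j - 1 : ℤ) : ℂ) * hbar)
      | Sum.inl _, Sum.inr (Sum.inr (Sum.inr _)) => 0
      | Sum.inr (Sum.inl b), Sum.inl f =>
          (-1 : ℂ) ^ η * Qbf b f (u + ((ξ - 2 * η : ℤ) : ℂ) * hbar)
      | Sum.inr (Sum.inl b), Sum.inr (Sum.inl j) =>
          Qb b (u + ((ξ + 2 * j - 1 : ℤ) : ℂ) * hbar)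
      | Sum.inr (Sum.inl _), Sum.inr (Sum.inr (Sum.inl _)) => 0
      | Sum.inr (Sum.inl b), Sum.inr (Sum.inr (Sum.inr j)) =>
          Qb b (u + ((ξ + 2 * j - 1 : ℤ) : ℂ) * hbar)
      | Sum.inr (Sum.inr r), Sum.inl f =>
          (-1 : ℂ) ^ (r - 1) * Qf f (u + ((ξ - 2 * r + 1 : ℤ) : ℂ) * hbar)
      | Sum.inr (Sum.inr _), Sum.inr _ => 0

/-- Row signs: `-1` on the `B2` rows. -/
def sgnR {ι : Type*} : ι ⊕ (ι ⊕ ℤ) → ℂ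
  | Sum.inr (Sum.inl _) => -1
  | _ => 1

/-- Column signs: `-1` on the non-fermionic columns. -/
def sgnC {ι : Type*} : ι ⊕ (ℤ ⊕ (ℤ ⊕ ℤ)) → ℂ
  | Sum.inr _ => -1
  | _ => 1

theorem sgnR_sq {ι : Type*} (r : ι ⊕ (ι ⊕ ℤ)) : sgnR r * sgnR r = 1 := by
  rcases r with r | r | r <;> simp [sgnR]

theorem sgnC_sq {ι : Type*} (r : ι ⊕ (ℤ ⊕ (ℤ ⊕ ℤ))) : sgnC r * sgnC r = 1 := by
  rcases r with r | r <;> simp [sgnC]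

theorem DeltaCF_eq {ι : Type*} (hbar : ℂ) (Qb Qf : ι → ℂ → ℂ) (Qbf : ι → ι → ℂ → ℂ)
    (B1 B2 F : List ι) (R T2 : List ℤ) (η ξ : ℤ) (u : ℂ) :
    DeltaCF hbar Qb Qf Qbf B1 B2 F R [] [] T2 η ξ u =
      listDet ((B1.map (Sum.inl : ι → ι ⊕ (ι ⊕ ℤ)) ++
        B2.map (fun b => (Sum.inr (Sum.inl b) : ι ⊕ (ι ⊕ ℤ)))) ++
        R.map (fun r => (Sum.inr (Sum.inr r) : ι ⊕ (ι ⊕ ℤ))))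
      (F.map (Sum.inl : ι → ι ⊕ (ℤ ⊕ (ℤ ⊕ ℤ))) ++
        T2.map (fun j => (Sum.inr (Sum.inr (Sum.inr j)) : ι ⊕ (ℤ ⊕ (ℤ ⊕ ℤ)))))
      (ent hbar Qb Qf Qbf η ξ u) := by
  have h : DeltaCF hbar Qb Qf Qbf B1 B2 F R [] [] T2 η ξ u =
      listDet ((B1.map (Sum.inl : ι → ι ⊕ (ι ⊕ ℤ)) ++
        B2.map (fun b => (Sum.inr (Sum.inl b) : ι ⊕ (ι ⊕ ℤ)))) ++
        R.map (fun r => (Sum.inr (Sum.inr r) : ι ⊕ (ι ⊕ ℤ))))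
      (F.map (Sum.inl : ι → ι ⊕ (ℤ ⊕ (ℤ ⊕ ℤ))) ++ [] ++ [] ++
        T2.map (fun j => (Sum.inr (Sum.inr (Sum.inr j)) : ι ⊕ (ℤ ⊕ (ℤ ⊕ ℤ)))))
      (ent hbar Qb Qf Qbf η ξ u) := rfl
  rw [h, List.append_nil, List.append_nil]

/-- **Bilinear determinant identity on the line `a = -s + η2` (case (v) of the
Hirota proof).** -/
theorem bilinear_case_v {ι : Type*} (hbar : ℂ) (hbar_ne : hbar ≠ 0)
    (Qb Qf : ι → ℂ → ℂ) (Qbf : ι → ι → ℂ → ℂ)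
    (B1 B2 F1 F2 : List ι) (hnd : (B1 ++ B2 ++ F1 ++ F2).Nodup)
    (hQQ : ∀ b ∈ B1 ++ B2, ∀ f ∈ F1 ++ F2, ∀ u : ℂ,
      Qb b u * Qf f u = Qbf b f (u + hbar) - Qbf b f (u - hbar))
    (hm2 : 1 ≤ B2.length) (hn : 1 ≤ F1.length + F2.length)
    (s : ℤ)
    (hs1 : -(F2.length : ℤ) ≤ s)
    (hs2 : s ≤ -((B1.length : ℤ) - F1.length) - 1)
    (hs3 : s ≤ ((B2.length : ℤ) - F2.length) - 1) :
    ∀ u : ℂ,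
      DeltaCF hbar Qb Qf Qbf B1 B2 (F1 ++ F2)
          (seg (s + ((B1.length : ℤ) - F1.length) + 2) 1) [] []
          (seg (s - ((B2.length : ℤ) - F2.length)) (-1)) 1 2 u *
        DeltaCF hbar Qb Qf Qbf B1 B2 (F1 ++ F2)
          (seg (s + ((B1.length : ℤ) - F1.length) + 1) 0) [] []
          (seg (s - ((B2.length : ℤ) - F2.length) + 1) 0) 0 2 u =
      -(DeltaCF hbar Qb Qf Qbf B1 B2 (F1 ++ F2)
            (seg (s + ((B1.length : ℤ) - F1.length) + 1) 0) [] []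
            (seg (s - ((B2.length : ℤ) - F2.length)) (-1)) 0 2 u *
          DeltaCF hbar Qb Qf Qbf B1 B2 (F1 ++ F2)
            (seg (s + ((B1.length : ℤ) - F1.length) + 2) 0) [] []
            (seg (s - ((B2.length : ℤ) - F2.length) + 1) (-1)) 1 2 u) -
        DeltaCF hbar Qb Qf Qbf B1 B2 (F1 ++ F2)
            (seg (s + ((B1.length : ℤ) - F1.length) + 2) 0) [] []
            (seg (s - ((B2.length : ℤ) - F2.length) + 1) (-1)) 0 2 u *
          DeltaCF hbar Qb Qf Qbf B1 B2 (F1 ++ F2)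
            (seg (s + ((B1.length : ℤ) - F1.length) + 1) 0) [] []
            (seg (s - ((B2.length : ℤ) - F2.length)) (-1)) 1 2 u := by
  intro u
  obtain ⟨p, hp⟩ : ∃ p : ℤ, p = s + ((B1.length : ℤ) - F1.length) := ⟨_, rfl⟩
  obtain ⟨q, hq⟩ : ∃ q : ℤ, q = s - ((B2.length : ℤ) - F2.length) := ⟨_, rfl⟩
  rw [← hp, ← hq]
  have hp1 : p ≤ -1 := by omega
  have hq1 : q ≤ -1 := by omega
  obtain ⟨R0, hR0⟩ : ∃ R0, R0 = seg (p + 2) 0 := ⟨_, rfl⟩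
  obtain ⟨T0, hT0⟩ : ∃ T0, T0 = seg (q + 1) (-1) := ⟨_, rfl⟩
  have r1 : seg (p + 2) 1 = R0 ++ [1] := by
    rw [hR0]; exact seg_snoc (p + 2) 0 (by omega)
  have r2 : seg (p + 1) 0 = (p + 1) :: R0 := by
    rw [hR0, seg_cons (p + 1) 0 (by omega)]; congr 2; ring
  have t1 : seg (q + 1) 0 = T0 ++ [0] := by
    rw [hT0]; exact seg_snoc (q + 1) (-1) (by omega)
  have t2 : seg q (-1) = q :: T0 := by
    rw [hT0, seg_cons q (-1) (by omega)]
  have lR : (R0.length : ℤ) = -p - 1 := by rw [hR0, seg_length]; omega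
  have lT : (T0.length : ℤ) = -q - 1 := by rw [hT0, seg_length]; omega
  simp only [DeltaCF_eq, r1, r2, t1, t2, ← hR0, ← hT0]
  clear r1 r2 t1 t2 hR0 hT0
  simp only [List.map_append (l₂ := [_]), List.map_cons, List.map_nil, ← List.append_assoc]
  obtain ⟨C0, hC0⟩ : ∃ C0 : List (ι ⊕ (ι ⊕ ℤ)), C0 = B1.map (Sum.inl : ι → ι ⊕ (ι ⊕ ℤ)) ++
        B2.map (fun b => (Sum.inr (Sum.inl b) : ι ⊕ (ι ⊕ ℤ))) := ⟨_, rfl⟩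
  obtain ⟨D0, hD0⟩ : ∃ D0 : List (ι ⊕ (ℤ ⊕ (ℤ ⊕ ℤ))), D0 = (F1 ++ F2).map Sum.inl := ⟨_, rfl⟩
  obtain ⟨RR, hRR⟩ : ∃ RR : List (ι ⊕ (ι ⊕ ℤ)), RR =
      R0.map (fun r => (Sum.inr (Sum.inr r) : ι ⊕ (ι ⊕ ℤ))) := ⟨_, rfl⟩
  obtain ⟨TT, hTT⟩ : ∃ TT : List (ι ⊕ (ℤ ⊕ (ℤ ⊕ ℤ))), TT =
      T0.map (fun j => (Sum.inr (Sum.inr (Sum.inr j)) : ι ⊕ (ℤ ⊕ (ℤ ⊕ ℤ)))) := ⟨_, rfl⟩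
  simp only [List.map_append] at hD0
  simp only [List.map_append, ← hC0, ← hD0, ← hRR, ← hTT]
  simp only [listDet_row_last _ _ _ C0 RR, listDet_col_last _ _ _ D0 TT]
  -- the determinants with `η = 1`, with signs taken out
  obtain ⟨M, hM⟩ : ∃ M : (ι ⊕ (ι ⊕ ℤ)) → (ι ⊕ (ℤ ⊕ (ℤ ⊕ ℤ))) → ℂ,
    M = fun r c => sgnR r * sgnC c * ent hbar Qb Qf Qbf 1 2 u r c := ⟨_, rfl⟩
  have hent : ent hbar Qb Qf Qbf 1 2 u = fun r c => sgnR r * sgnC c * M r c := by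
    funext r c
    rw [hM]
    linear_combination (-(ent hbar Qb Qf Qbf 1 2 u r c)) * sgnR_sq r +
      (-(ent hbar Qb Qf Qbf 1 2 u r c) * (sgnR r * sgnR r)) * sgnC_sq c
  have key := list_key (C0 ++ RR) (D0 ++ TT)
    (by
      have : ((C0 ++ RR).length : ℤ) = (D0 ++ TT).length := by
        rw [hC0, hD0, hRR, hTT]
        simp only [List.length_append, List.length_map]
        push_cast
        omega
      exact_mod_cast this)
    (Sum.inr (Sum.inr (p + 1))) (Sum.inr (Sum.inr 1))
    (Sum.inr (Sum.inr (Sum.inr q))) (Sum.inr (Sum.inr (Sum.inr 0))) M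
    (ent hbar Qb Qf Qbf 0 2 u)
    (by
      intro r hr c hc
      rw [hM]
      rcases r with b | b | r <;> rcases c with f | j | j | j
      case inr.inl.inl =>
        have hb : b ∈ B1 ++ B2 := by
          rw [hC0, hRR] at hr; simp at hr; simp [hr]
        have hf : f ∈ F1 ++ F2 := by
          rw [hD0, hTT] at hc; simp at hc; simpa using hc
        have := hQQ b hb f hf (u + hbar)
        simp [ent, sgnR, sgnC]
        rw [show u + 2 * hbar = u + hbar + hbar by ring]
        have e2 : (2 : ℂ) - 1 = 1 := by norm_num
        simp only [add_sub_cancel_right] at this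
        try simp only [e2, one_mul]
        linear_combination -this
      all_goals first
        | (exfalso; rw [hD0, hTT] at hc; simp at hc; done)
        | simp [ent, sgnR, sgnC])
    (by rw [hM]; simp [ent]) (by rw [hM]; simp [ent]) (by rw [hM]; simp [ent])
    (by rw [hM]; simp [ent])
  simp only [hent, listDet_scale, List.map_append, List.prod_append, List.map_cons, List.map_nil,
    List.prod_cons, List.prod_nil]
  simp only [sgnR, sgnC]
  linear_combination (-(C0.map sgnR).prod * (RR.map sgnR).prod * (D0.map sgnC).prod *
    (TT.map sgnC).prod * (-1) ^ RR.length * (-1) ^ TT.length) * key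

end Stmt13
end

section
/- Removing the twist turns the twisted QQ-relations into coefficient-free QQ-relations. For an ordered tuple I of distinct elements of ℐ set a_I := ∏_{j≺k in I} ((z_j−z_k)/(w_j·w_k))^{p_j·p_k} (empty product = 1, and a_I = 1 for |I| ≤ 1) and define 𝒬_I := a_I · (∏_{i∈I} f_i) · Q_{I}, where Q is evaluated on the underlying set of I. Then for every ordered tuple I and distinct i, j not occurring in I, writing (I,i), (I,j), (I,i,j) for the tuples obtained by appending i, respectively j, respectively i then j, at the end of I: if p_i = p_j then 𝒬_I·𝒬_{(I,i,j)} = 𝒬_{(I,i)}^{[p_i]}·𝒬_{(I,j)}^{[−p_i]} − 𝒬_{(I,i)}^{[−p_i]}·𝒬_{(I,j)}^{[p_i]}, and if p_i = −p_j then 𝒬_{(I,i)}·𝒬_{(I,j)} = 𝒬_I^{[−p_i]}·𝒬_{(I,i,j)}^{[p_i]} − 𝒬_I^{[p_i]}·𝒬_{(I,i,j)}^{[−p_i]}. -/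
open scoped BigOperators

namespace Stmt15

/-- The twist factor `a_I = ∏_{j≺k in I} ((z_j−z_k)/(w_j·w_k))^{p_j·p_k}`. -/
noncomputable def twistFactor {ι : Type*} (z w : ι → ℂ) (p : ι → ℤ) (I : List ι) : ℂ :=
  ∏ i : Fin I.length, ∏ j : Fin I.length,
    if i < j then ((z (I.get i) - z (I.get j)) / (w (I.get i) * w (I.get j))) ^
      (p (I.get i) * p (I.get j)) else 1

/-- The coefficient-free (untwisted) Q-function
`𝒬_I(u) = a_I · (∏_{i∈I} f_i(u)) · Q_I(u)`. -/
noncomputable def QCF {ι : Type*} [DecidableEq ι] (z w : ι → ℂ) (p : ι → ℤ)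
    (f : ι → ℂ → ℂ) (Q : Finset ι → ℂ → ℂ) (I : List ι) (u : ℂ) : ℂ :=
  twistFactor z w p I * (I.map (fun i => f i u)).prod * Q I.toFinset u

theorem twistFactor_cons {ι : Type*} (z w : ι → ℂ) (p : ι → ℤ) (x : ι) (I : List ι) :
    twistFactor z w p (x :: I) =
      (I.map (fun y => ((z x - z y) / (w x * w y)) ^ (p x * p y))).prod * twistFactor z w p I := by
  have h : (I.map (fun y => ((z x - z y) / (w x * w y)) ^ (p x * p y))).prod =
      ∏ j : Fin I.length, ((z x - z (I.get j)) / (w x * w (I.get j))) ^ (p x * p (I.get j)) := by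
    rw [← List.prod_ofFn]
    congr 1
    apply List.ext_getElem <;> simp
  rw [h]
  unfold twistFactor
  simp only [List.length_cons]
  rw [Fin.prod_univ_succ]
  congr 1
  · rw [Fin.prod_univ_succ]
    simp
  · refine Finset.prod_congr rfl fun i _ => ?_
    rw [Fin.prod_univ_succ]
    simp

theorem twistFactor_append {ι : Type*} (z w : ι → ℂ) (p : ι → ℤ) (x : ι) (I : List ι) :
    twistFactor z w p (I ++ [x]) =
      twistFactor z w p I * (I.map (fun y => ((z y - z x) / (w y * w x)) ^ (p y * p x))).prod := by
  induction I with
  | nil => simp [twistFactor]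
  | cons a I ih =>
    rw [List.cons_append, twistFactor_cons, twistFactor_cons, ih]
    simp only [List.map_append, List.prod_append, List.map_cons, List.prod_cons, List.map_nil,
      List.prod_nil]
    ring

theorem prod_shift {ι : Type*} (f : ι → ℂ → ℂ) (a b u : ℂ)
    (h : ∀ i, f i a * f i b = f i u * f i u) (I : List ι) :
    (I.map (fun i => f i a)).prod * (I.map (fun i => f i b)).prod =
      (I.map (fun i => f i u)).prod * (I.map (fun i => f i u)).prod := by
  rw [← List.prod_map_mul, ← List.prod_map_mul]
  simp only [h]

/-- **Removing the twist turns the twisted QQ-relations into coefficient-free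
QQ-relations.** -/
theorem untwisted_QQ {ι : Type*} [Fintype ι] [DecidableEq ι]
    (hbar : ℂ) (hbar_ne : hbar ≠ 0)
    (Bos : Finset ι) (p : ι → ℤ) (hp : ∀ i, p i = if i ∈ Bos then 1 else -1)
    (z w : ι → ℂ) (hz0 : ∀ i, z i ≠ 0) (hzd : Function.Injective z)
    (hw : ∀ i, w i ^ 2 = z i)
    (f : ι → ℂ → ℂ) (hf0 : ∀ i u, f i u ≠ 0)
    (hfsh : ∀ i : ι, ∀ k : ℤ, ∀ u : ℂ, f i (u + (k : ℂ) * hbar) = w i ^ (p i * k) * f i u)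
    (Q : Finset ι → ℂ → ℂ)
    (hQQ1 : ∀ I : Finset ι, ∀ i ∉ I, ∀ j ∉ I, i ≠ j → p i = p j → ∀ u : ℂ,
      (z i - z j) * (Q I u * Q (insert i (insert j I)) u) =
        z i * Q (insert i I) (u + (p i : ℂ) * hbar) * Q (insert j I) (u - (p i : ℂ) * hbar) -
        z j * Q (insert i I) (u - (p i : ℂ) * hbar) * Q (insert j I) (u + (p i : ℂ) * hbar))
    (hQQ2 : ∀ I : Finset ι, ∀ i ∉ I, ∀ j ∉ I, i ≠ j → p i = -p j → ∀ u : ℂ,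
      (z i - z j) * (Q (insert i I) u * Q (insert j I) u) =
        z i * Q I (u - (p i : ℂ) * hbar) * Q (insert i (insert j I)) (u + (p i : ℂ) * hbar) -
        z j * Q I (u + (p i : ℂ) * hbar) * Q (insert i (insert j I)) (u - (p i : ℂ) * hbar)) :
    ∀ I : List ι, I.Nodup → ∀ i j : ι, i ∉ I → j ∉ I → i ≠ j →
      (p i = p j → ∀ u : ℂ,
        QCF z w p f Q I u * QCF z w p f Q (I ++ [i, j]) u =
          QCF z w p f Q (I ++ [i]) (u + (p i : ℂ) * hbar) *
              QCF z w p f Q (I ++ [j]) (u - (p i : ℂ) * hbar) -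
            QCF z w p f Q (I ++ [i]) (u - (p i : ℂ) * hbar) *
              QCF z w p f Q (I ++ [j]) (u + (p i : ℂ) * hbar)) ∧
      (p i = -p j → ∀ u : ℂ,
        QCF z w p f Q (I ++ [i]) u * QCF z w p f Q (I ++ [j]) u =
          QCF z w p f Q I (u - (p i : ℂ) * hbar) *
              QCF z w p f Q (I ++ [i, j]) (u + (p i : ℂ) * hbar) -
            QCF z w p f Q I (u + (p i : ℂ) * hbar) *
              QCF z w p f Q (I ++ [i, j]) (u - (p i : ℂ) * hbar)) := by
  intro I _ i j hi hj hij
  have hw0 : ∀ i, w i ≠ 0 := fun i h => hz0 i (by rw [← hw i, h]; simp)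
  have hpp : ∀ i, p i * p i = 1 := by
    intro i; rw [hp i]; split_ifs <;> norm_num
  have hzij : z i - z j ≠ 0 := sub_ne_zero.mpr fun h => hij (hzd h)
  have hneg : ∀ (k : ℤ) (v : ℂ) (l : ι), f l (v - (k : ℂ) * hbar) = w l ^ (-(p l * k)) * f l v := by
    intro k v l
    have := hfsh l (-k) v
    rw [mul_neg] at this
    rw [← this]; congr 1; push_cast; ring
  have hsh : ∀ u : ℂ, (I.map (fun l => f l (u + (p i : ℂ) * hbar))).prod *
      (I.map (fun l => f l (u - (p i : ℂ) * hbar))).prod =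
      (I.map (fun l => f l u)).prod * (I.map (fun l => f l u)).prod := by
    intro u
    refine prod_shift f _ _ u (fun l => ?_) I
    rw [hfsh, hneg, zpow_neg]
    have := zpow_ne_zero (p l * p i) (hw0 l)
    field_simp
  have hi' : i ∉ I.toFinset := by simpa using hi
  have hj' : j ∉ I.toFinset := by simpa using hj
  have e1 : ∀ l, (I ++ [l]).toFinset = insert l I.toFinset := by
    intro l; ext; simp
  have e2 : (I ++ [i, j]).toFinset = insert i (insert j I.toFinset) := by
    ext; simp
  have t2 : twistFactor z w p (I ++ [i, j]) = twistFactor z w p I *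
      (I.map (fun y => ((z y - z i) / (w y * w i)) ^ (p y * p i))).prod *
      (I.map (fun y => ((z y - z j) / (w y * w j)) ^ (p y * p j))).prod *
      ((z i - z j) / (w i * w j)) ^ (p i * p j) := by
    have : I ++ [i, j] = (I ++ [i]) ++ [j] := by simp
    rw [this, twistFactor_append, twistFactor_append]
    simp only [List.map_append, List.prod_append, List.map_cons, List.prod_cons, List.map_nil,
      List.prod_nil]
    ring
  have hwi := hw0 i
  have hwj := hw0 j
  constructor
  · intro hpij u
    have hq := hQQ1 I.toFinset i hi' j hj' hij hpij u
    have hs := hsh u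
    have x1 : p j * p i = 1 := by rw [hpij]; exact hpp j
    have x2 : p i * p j = 1 := by rw [mul_comm]; exact x1
    unfold QCF
    rw [t2]
    simp only [twistFactor_append, e1, e2, List.map_append, List.prod_append, List.map_cons,
      List.prod_cons, List.map_nil, List.prod_nil, hfsh i, hfsh j, hneg _ _ i, hneg _ _ j, hpp, x1,
      x2, zpow_one, zpow_neg]
    rw [← hw i, ← hw j] at hq
    generalize (I.map (fun y => ((z y - z i) / (w y * w i)) ^ (p y * p i))).prod = A
    generalize (I.map (fun y => ((z y - z j) / (w y * w j)) ^ (p y * p j))).prod = B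
    generalize twistFactor z w p I = T
    rw [← hw i, ← hw j]
    generalize (I.map (fun l => f l (u + (p i : ℂ) * hbar))).prod = Fp at *
    generalize (I.map (fun l => f l (u - (p i : ℂ) * hbar))).prod = Fm at *
    generalize (I.map (fun l => f l u)).prod = F at *
    field_simp
    linear_combination (T ^ 2 * A * B * F ^ 2 * f i u * f j u) * hq - (T ^ 2 * A * B * f i u * f j u * (w i ^ 2 * Q (insert i I.toFinset) (u + (p i : ℂ) * hbar) * Q (insert j I.toFinset) (u - (p i : ℂ) * hbar) -
        w j ^ 2 * Q (insert i I.toFinset) (u - (p i : ℂ) * hbar) * Q (insert j I.toFinset) (u + (p i : ℂ) * hbar))) * hs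
  · intro hpij u
    have hq := hQQ2 I.toFinset i hi' j hj' hij hpij u
    have hs := hsh u
    have x1 : p j * p i = -1 := by rw [hpij, mul_neg, hpp j]
    have x2 : p i * p j = -1 := by rw [mul_comm]; exact x1
    unfold QCF
    rw [t2]
    simp only [twistFactor_append, e1, e2, List.map_append, List.prod_append, List.map_cons,
      List.prod_cons, List.map_nil, List.prod_nil, hfsh i, hfsh j, hneg _ _ i, hneg _ _ j, hpp, x1,
      x2, zpow_one, zpow_neg, inv_inv]
    rw [← hw i, ← hw j] at hq hzij
    generalize (I.map (fun y => ((z y - z i) / (w y * w i)) ^ (p y * p i))).prod = A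
    generalize (I.map (fun y => ((z y - z j) / (w y * w j)) ^ (p y * p j))).prod = B
    generalize twistFactor z w p I = T
    rw [← hw i, ← hw j]
    generalize (I.map (fun l => f l (u + (p i : ℂ) * hbar))).prod = Fp at *
    generalize (I.map (fun l => f l (u - (p i : ℂ) * hbar))).prod = Fm at *
    generalize (I.map (fun l => f l u)).prod = F at *
    generalize hD : w i ^ 2 - w j ^ 2 = D at *
    field_simp
    linear_combination (T ^ 2 * A * B * F ^ 2 * f i u * f j u) * hq - (T ^ 2 * A * B * f i u * f j u * (w i ^ 2 * Q I.toFinset (u - (p i : ℂ) * hbar) * Q (insert i (insert j I.toFinset)) (u + (p i : ℂ) * hbar) -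
        w j ^ 2 * Q I.toFinset (u + (p i : ℂ) * hbar) * Q (insert i (insert j I.toFinset)) (u - (p i : ℂ) * hbar))) * hs

end Stmt15
end

section
/- The Y-system follows from the Hirota T-system. Suppose the family T_{a,s} satisfies T_{a,s}^{[−1]}·T_{a,s}^{[+1]} = T_{a,s−1}·T_{a,s+1} + T_{a−1,s}·T_{a+1,s} pointwise on ℂ for all a, s ∈ ℤ. Define Y_{a,s} := (T_{a,s−1}·T_{a,s+1})/(T_{a−1,s}·T_{a+1,s}) wherever the denominator is nonzero. Then for every a, s ∈ ℤ and every u ∈ ℂ such that all the values T_{a′,s′}(u+kħ) with |a′−a| ≤ 2, |s′−s| ≤ 2 and k ∈ {−1,0,1} are nonzero, one has Y_{a,s}^{[−1]}(u)·Y_{a,s}^{[+1]}(u) = (1+Y_{a,s−1}(u))·(1+Y_{a,s+1}(u)) / ((1+Y_{a−1,s}(u)^{−1})·(1+Y_{a+1,s}(u)^{−1})). -/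
namespace Stmt18

/-- The Y-functions associated to a family of T-functions. -/
noncomputable def Y (T : ℤ → ℤ → ℂ → ℂ) (a s : ℤ) (u : ℂ) : ℂ :=
  (T a (s - 1) u * T a (s + 1) u) / (T (a - 1) s u * T (a + 1) s u)

/-- **The Y-system follows from the Hirota T-system.** -/
theorem ysystem_of_hirota (hbar : ℂ) (hbar_ne : hbar ≠ 0) (T : ℤ → ℤ → ℂ → ℂ)
    (hT : ∀ a s : ℤ, ∀ u : ℂ,
      T a s (u - hbar) * T a s (u + hbar) =
        T a (s - 1) u * T a (s + 1) u + T (a - 1) s u * T (a + 1) s u) :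
    ∀ a s : ℤ, ∀ u : ℂ,
      (∀ a' s' k : ℤ, |a' - a| ≤ 2 → |s' - s| ≤ 2 → |k| ≤ 1 →
        T a' s' (u + (k : ℂ) * hbar) ≠ 0) →
      Y T a s (u - hbar) * Y T a s (u + hbar) =
        (1 + Y T a (s - 1) u) * (1 + Y T a (s + 1) u) /
          ((1 + (Y T (a - 1) s u)⁻¹) * (1 + (Y T (a + 1) s u)⁻¹)) := by
  intro a s u h
  have h0 : ∀ a' s' : ℤ, |a' - a| ≤ 2 → |s' - s| ≤ 2 → T a' s' u ≠ 0 := by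
    intro a' s' h1 h2
    simpa using h a' s' 0 h1 h2 (by norm_num)
  have hp : ∀ a' s' : ℤ, |a' - a| ≤ 2 → |s' - s| ≤ 2 → T a' s' (u + hbar) ≠ 0 := by
    intro a' s' h1 h2
    simpa using h a' s' 1 h1 h2 (by norm_num)
  have hm : ∀ a' s' : ℤ, |a' - a| ≤ 2 → |s' - s| ≤ 2 → T a' s' (u - hbar) ≠ 0 := by
    intro a' s' h1 h2
    simpa [sub_eq_add_neg] using h a' s' (-1) h1 h2 (by norm_num)
  have e1 : ∀ b t : ℤ, T (b - 1) t u ≠ 0 → T (b + 1) t u ≠ 0 →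
      1 + Y T b t u =
        T b t (u - hbar) * T b t (u + hbar) / (T (b - 1) t u * T (b + 1) t u) := by
    intro b t h1 h2
    rw [hT, Y]
    field_simp
    ring
  have e2 : ∀ b t : ℤ, T b (t - 1) u ≠ 0 → T b (t + 1) u ≠ 0 →
      1 + (Y T b t u)⁻¹ =
        T b t (u - hbar) * T b t (u + hbar) / (T b (t - 1) u * T b (t + 1) u) := by
    intro b t h1 h2
    rw [hT, Y, inv_div]
    field_simp
  have n1 := h0 (a - 1) (s - 1) (by simp) (by simp)
  have n2 := h0 (a - 1) (s + 1) (by simp) (by simp)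
  have n3 := h0 (a + 1) (s - 1) (by simp) (by simp)
  have n4 := h0 (a + 1) (s + 1) (by simp) (by simp)
  have p1 := hp (a - 1) s (by simp) (by simp)
  have p2 := hp (a + 1) s (by simp) (by simp)
  have m1 := hm (a - 1) s (by simp) (by simp)
  have m2 := hm (a + 1) s (by simp) (by simp)
  rw [e1 a (s - 1) n1 n3, e1 a (s + 1) n2 n4, e2 (a - 1) s n1 n2, e2 (a + 1) s n3 n4, Y, Y]
  field_simp

end Stmt18
end

section
/- Y-system-like equation for the Bäcklund flow. Define 𝔄_{a,s} := z·(T_{a+1,s−1}·T′_{a,s+1})/(T_{a,s}·T′_{a+1,s}) and 𝔄′_{a,s} := z′·(T′_{a+1,s−1}·T″_{a,s+1})/(T′_{a,s}·T″_{a+1,s}) wherever the denominators are nonzero. Then for every a, s ∈ ℤ and every u ∈ ℂ at which all the values of T, T′, T″ occurring in the following identity (at the appropriately shifted arguments u−ħ, u, u+ħ) are nonzero, one has 𝔄_{a+1,s}^{[−1]}(u) · 𝔄′_{a,s}^{[+1]}(u) = (1+𝔄_{a+1,s−1}(u))·(1+𝔄′_{a,s+1}(u)) / ((1+𝔄_{a,s}(u)^{−1})·(1+𝔄′_{a+1,s}(u)^{−1})).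 -/
namespace Stmt19

/-- The Y-type function `𝔄_{a,s}` associated to a Bäcklund pair `(T, T')`. -/
noncomputable def A (z : ℂ) (T T' : ℤ → ℤ → ℂ → ℂ) (a s : ℤ) (u : ℂ) : ℂ :=
  z * T (a + 1) (s - 1) u * T' a (s + 1) u / (T a s u * T' (a + 1) s u)

/-- **Y-system-like equation for the Bäcklund flow.** -/
theorem ysystem_backlund (hbar : ℂ) (hbar_ne : hbar ≠ 0) (z z' : ℂ)
    (hz : z ≠ 0) (hz' : z' ≠ 0)
    (T T' T'' : ℤ → ℤ → ℂ → ℂ)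
    (hB1 : ∀ a s : ℤ, ∀ u : ℂ,
      T (a + 1) s (u - hbar) * T' a s (u + hbar) - T a s u * T' (a + 1) s u =
        z * T (a + 1) (s - 1) u * T' a (s + 1) u)
    (hB2 : ∀ a s : ℤ, ∀ u : ℂ,
      T' (a + 1) s (u - hbar) * T'' a s (u + hbar) - T' a s u * T'' (a + 1) s u =
        z' * T' (a + 1) (s - 1) u * T'' a (s + 1) u) :
    ∀ a s : ℤ, ∀ u : ℂ,
      T (a + 2) (s - 1) (u - hbar) ≠ 0 → T' (a + 1) (s + 1) (u - hbar) ≠ 0 →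
      T (a + 1) s (u - hbar) ≠ 0 → T' (a + 2) s (u - hbar) ≠ 0 →
      T' (a + 1) (s - 1) (u + hbar) ≠ 0 → T'' a (s + 1) (u + hbar) ≠ 0 →
      T' a s (u + hbar) ≠ 0 → T'' (a + 1) s (u + hbar) ≠ 0 →
      T (a + 2) (s - 2) u ≠ 0 → T (a + 1) (s - 1) u ≠ 0 → T a s u ≠ 0 →
      T' (a + 1) s u ≠ 0 → T' (a + 2) (s - 1) u ≠ 0 → T' a (s + 1) u ≠ 0 →
      T'' a (s + 2) u ≠ 0 → T'' (a + 1) (s + 1) u ≠ 0 → T'' (a + 2) s u ≠ 0 →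
      A z T T' (a + 1) s (u - hbar) * A z' T' T'' a s (u + hbar) =
        (1 + A z T T' (a + 1) (s - 1) u) * (1 + A z' T' T'' a (s + 1) u) /
          ((1 + (A z T T' a s u)⁻¹) * (1 + (A z' T' T'' (a + 1) s u)⁻¹)) := by
  intro a s u h1 h2 h3 h4 h5 h6 h7 h8 h9 h10 h11 h12 h13 h14 h15 h16 h17
  have e2 : a + 1 + 1 = a + 2 := by ring
  have e3 : s - 1 - 1 = s - 2 := by ring
  have e4 : s + 1 + 1 = s + 2 := by ring
  have e5 : s - 1 + 1 = s := by ring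
  have e6 : s + 1 - 1 = s := by ring
  have k1 : 1 + A z T T' (a + 1) (s - 1) u =
      T (a + 2) (s - 1) (u - hbar) * T' (a + 1) (s - 1) (u + hbar) /
        (T (a + 1) (s - 1) u * T' (a + 2) (s - 1) u) := by
    have h := hB1 (a + 1) (s - 1) u
    simp only [A, e2, e3, e5] at h ⊢
    rw [← h]
    field_simp
    ring
  have k2 : 1 + A z' T' T'' a (s + 1) u =
      T' (a + 1) (s + 1) (u - hbar) * T'' a (s + 1) (u + hbar) /
        (T' a (s + 1) u * T'' (a + 1) (s + 1) u) := by
    have h := hB2 a (s + 1) u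
    simp only [A, e4, e6] at h ⊢
    rw [← h]
    field_simp
    ring
  have k3 : 1 + (A z T T' a s u)⁻¹ =
      T (a + 1) s (u - hbar) * T' a s (u + hbar) /
        (z * T (a + 1) (s - 1) u * T' a (s + 1) u) := by
    have h := hB1 a s u
    rw [sub_eq_iff_eq_add] at h
    simp only [A]
    rw [h]
    field_simp
  have k4 : 1 + (A z' T' T'' (a + 1) s u)⁻¹ =
      T' (a + 2) s (u - hbar) * T'' (a + 1) s (u + hbar) /
        (z' * T' (a + 2) (s - 1) u * T'' (a + 1) (s + 1) u) := by
    have h := hB2 (a + 1) s u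
    rw [sub_eq_iff_eq_add] at h
    simp only [A, e2] at h ⊢
    rw [h]
    field_simp
  rw [k1, k2, k3, k4]
  simp only [A, e2]
  field_simp

end Stmt19
end
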